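/- arXiv:1803.10337 — 2 statements merged into one kernel-verified Lean document; each statement's English description precedes it below -/
import Mathlib

section
/- The Hilbert function of M is unimodal: there exists an integer p such that dim_K M_{d−1} ≤ dim_K M_d for all d ≤ p and dim_K M_d ≥ dim_K M_{d+1} for all d ≥ p. -/
open MvPolynomial

noncomputable section

variable {K : Type*} [Field K]

/-- `p` is homogeneous of (integer) degree `d`; for `d < 0` this forces `p = 0`. -/
def homog (p : MvPolynomial (Fin 3) K) (d : ℤ) : Prop :=
  IsWeightedHomogeneous (fun _ : Fin 3 => (1 : ℤ)) p d

/-- The degree-`d` graded piece of `⊕_{i=1}^{N} R(-a i)`, as a `K`-subspace of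
`Fin N → R`, `R = K[x,y,z]`. -/
def degPiece (N : ℕ) (a : Fin N → ℤ) (d : ℤ) :
    Submodule K (Fin N → MvPolynomial (Fin 3) K) :=
  Submodule.pi Set.univ fun i =>
    weightedHomogeneousSubmodule K (fun _ : Fin 3 => (1 : ℤ)) (d - a i)

lemma mem_degPiece {N : ℕ} {a : Fin N → ℤ} {d : ℤ} {v : Fin N → MvPolynomial (Fin 3) K} :
    v ∈ degPiece (K := K) N a d ↔ ∀ i, homog (v i) (d - a i) := by
  simp [degPiece, Submodule.mem_pi, mem_weightedHomogeneousSubmodule, homog]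

/-- The map `φ : ⊕ R(-a i) → ⊕ R(-b j)` given by the matrix `Φ`, as a `K`-linear map. -/
def phiK (n : ℕ) (Φ : Matrix (Fin n) (Fin (n + 2)) (MvPolynomial (Fin 3) K)) :
    (Fin (n + 2) → MvPolynomial (Fin 3) K) →ₗ[K] (Fin n → MvPolynomial (Fin 3) K) :=
  (Matrix.mulVecLin Φ).restrictScalars K

/-- The degree-`d` graded piece of `N = ker φ`. -/
def Nd (n : ℕ) (a : Fin (n + 2) → ℤ) (Φ : Matrix (Fin n) (Fin (n + 2)) (MvPolynomial (Fin 3) K))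
    (d : ℤ) : Submodule K (Fin (n + 2) → MvPolynomial (Fin 3) K) :=
  degPiece (n + 2) a d ⊓ LinearMap.ker (phiK n Φ)

/-- The image of the degree-`d` piece of `F` inside the degree-`d` piece of `G`,
viewed as a subspace of the latter. -/
def MdSub (n : ℕ) (a : Fin (n + 2) → ℤ) (b : Fin n → ℤ)
    (Φ : Matrix (Fin n) (Fin (n + 2)) (MvPolynomial (Fin 3) K)) (d : ℤ) :
    Submodule K ↥(degPiece (K := K) n b d) :=
  Submodule.comap (degPiece (K := K) n b d).subtype
    (Submodule.map (phiK n Φ) (degPiece (n + 2) a d))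

/-- The degree-`d` graded piece of `M = coker φ`. -/
abbrev Md (n : ℕ) (a : Fin (n + 2) → ℤ) (b : Fin n → ℤ)
    (Φ : Matrix (Fin n) (Fin (n + 2)) (MvPolynomial (Fin 3) K)) (d : ℤ) :=
  ↥(degPiece (K := K) n b d) ⧸ MdSub n a b Φ d

/-- Multiplication by `L` on tuples of polynomials, as a `K`-linear map. -/
def mulL (N : ℕ) (L : MvPolynomial (Fin 3) K) :
    (Fin N → MvPolynomial (Fin 3) K) →ₗ[K] (Fin N → MvPolynomial (Fin 3) K) :=
  ((LinearMap.lsmul (MvPolynomial (Fin 3) K) (Fin N → MvPolynomial (Fin 3) K)) L).restrictScalars K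

lemma mulL_apply {N : ℕ} (L : MvPolynomial (Fin 3) K) (v : Fin N → MvPolynomial (Fin 3) K) :
    mulL N L v = L • v := rfl

lemma mulL_mem {N : ℕ} {a : Fin N → ℤ} {L : MvPolynomial (Fin 3) K} (hL : homog L 1)
    {d : ℤ} {v : Fin N → MvPolynomial (Fin 3) K} (hv : v ∈ degPiece (K := K) N a (d - 1)) :
    mulL N L v ∈ degPiece (K := K) N a d := by
  rw [mem_degPiece] at hv ⊢
  intro i
  have h := hL.mul (hv i)
  have e : (1 : ℤ) + (d - 1 - a i) = d - a i := by ring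
  rw [e] at h
  simpa [mulL_apply, smul_eq_mul, homog] using h

/-- Multiplication by `L` from the degree-`d-1` piece of `G` to the degree-`d` piece. -/
def mulLres (n : ℕ) (b : Fin n → ℤ) (L : MvPolynomial (Fin 3) K) (hL : homog L 1) (d : ℤ) :
    ↥(degPiece (K := K) n b (d - 1)) →ₗ[K] ↥(degPiece (K := K) n b d) :=
  (mulL n L).restrict fun _ hv => mulL_mem hL hv

lemma mulLres_comap (n : ℕ) (a : Fin (n + 2) → ℤ) (b : Fin n → ℤ)
    (Φ : Matrix (Fin n) (Fin (n + 2)) (MvPolynomial (Fin 3) K))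
    (L : MvPolynomial (Fin 3) K) (hL : homog L 1) (d : ℤ) :
    MdSub n a b Φ (d - 1) ≤ Submodule.comap (mulLres n b L hL d) (MdSub n a b Φ d) := by
  rintro ⟨w, hw⟩ hmem
  obtain ⟨v, hv, hφv⟩ := hmem
  refine ⟨mulL (n + 2) L v, mulL_mem hL hv, ?_⟩
  show phiK n Φ (mulL (n + 2) L v) = ((mulLres n b L hL d) ⟨w, hw⟩ : Fin n → MvPolynomial (Fin 3) K)
  have : phiK n Φ (mulL (n + 2) L v) = L • phiK n Φ v := by
    simp [phiK, mulL_apply]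
  rw [this, hφv]
  rfl

/-- The map induced by multiplication by `L` from `M_{d-1}` to `M_d`,
where `M = coker φ`. -/
def mulLmap (n : ℕ) (a : Fin (n + 2) → ℤ) (b : Fin n → ℤ)
    (Φ : Matrix (Fin n) (Fin (n + 2)) (MvPolynomial (Fin 3) K))
    (L : MvPolynomial (Fin 3) K) (hL : homog L 1) (d : ℤ) :
    Md n a b Φ (d - 1) →ₗ[K] Md n a b Φ d :=
  Submodule.mapQ (MdSub n a b Φ (d - 1)) (MdSub n a b Φ d) (mulLres n b L hL d)
    (mulLres_comap n a b Φ L hL d)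

/-- The linear form with coefficient vector `c`. -/
def linform (c : Fin 3 → K) : MvPolynomial (Fin 3) K := ∑ i, C (c i) * X i

lemma homog_linform (c : Fin 3 → K) : homog (linform c) 1 := by
  rw [homog, ← mem_weightedHomogeneousSubmodule]
  refine sum_mem fun i _ => ?_
  rw [mem_weightedHomogeneousSubmodule]
  simpa using (isWeightedHomogeneous_C (fun _ : Fin 3 => (1 : ℤ)) (c i)).mul
    (isWeightedHomogeneous_X K (fun _ : Fin 3 => (1 : ℤ)) i)

/-- Finite length of `coker φ`: all sufficiently high graded pieces vanish. -/
def FiniteColength (n : ℕ) (a : Fin (n + 2) → ℤ) (b : Fin n → ℤ)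
    (Φ : Matrix (Fin n) (Fin (n + 2)) (MvPolynomial (Fin 3) K)) : Prop :=
  ∃ D : ℤ, ∀ d : ℤ, D ≤ d →
    degPiece (K := K) n b d ≤ Submodule.map (phiK n Φ) (degPiece (n + 2) a d)

end

set_option linter.unusedSectionVars false
set_option linter.unusedSimpArgs false
set_option linter.unusedVariables false

section BR
variable {R : Type*} [CommRing R] {ι κ : Type*} [Fintype ι] [Fintype κ] [DecidableEq ι] [DecidableEq κ]

/-- the matrix `Φ` with two additional rows `u`, `v` -/
def brB (e : κ ≃ ι ⊕ Fin 2) (Φ : Matrix ι κ R) (u v : κ → R) : Matrix κ κ R :=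
  Matrix.of fun k => Sum.elim Φ ![u, v] (e k)

/-- determinant of `Φ` with two extra rows -/
def brD (e : κ ≃ ι ⊕ Fin 2) (Φ : Matrix ι κ R) (u v : κ → R) : R := (brB e Φ u v).det

lemma brB_inl (e : κ ≃ ι ⊕ Fin 2) (Φ : Matrix ι κ R) (u v : κ → R) (j : ι) (l : κ) :
    brB e Φ u v (e.symm (Sum.inl j)) l = Φ j l := by
  simp only [brB, Matrix.of_apply, Equiv.apply_symm_apply]; rfl

lemma brB_inr0 (e : κ ≃ ι ⊕ Fin 2) (Φ : Matrix ι κ R) (u v : κ → R) (l : κ) :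
    brB e Φ u v (e.symm (Sum.inr 0)) l = u l := by
  simp only [brB, Matrix.of_apply, Equiv.apply_symm_apply]; rfl

lemma brB_inr1 (e : κ ≃ ι ⊕ Fin 2) (Φ : Matrix ι κ R) (u v : κ → R) (l : κ) :
    brB e Φ u v (e.symm (Sum.inr 1)) l = v l := by
  simp only [brB, Matrix.of_apply, Equiv.apply_symm_apply]; rfl

lemma brB_updU (e : κ ≃ ι ⊕ Fin 2) (Φ : Matrix ι κ R) (u v w : κ → R) :
    (brB e Φ u v).updateRow (e.symm (Sum.inr 0)) w = brB e Φ w v := by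
  ext k l
  obtain ⟨k, rfl⟩ := e.symm.surjective k
  rcases k with k | k
  · simp [brB_inl, brB_inr0, brB_inr1, Matrix.updateRow_apply]
  · fin_cases k <;> simp [brB_inl, brB_inr0, brB_inr1, Matrix.updateRow_apply]

lemma brB_updV (e : κ ≃ ι ⊕ Fin 2) (Φ : Matrix ι κ R) (u v w : κ → R) :
    (brB e Φ u v).updateRow (e.symm (Sum.inr 1)) w = brB e Φ u w := by
  ext k l
  obtain ⟨k, rfl⟩ := e.symm.surjective k
  rcases k with k | k
  · simp [brB_inl, brB_inr0, brB_inr1, Matrix.updateRow_apply]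
  · fin_cases k <;> simp [brB_inl, brB_inr0, brB_inr1, Matrix.updateRow_apply]

/-- `brD` linear in the second argument -/
def brL (e : κ ≃ ι ⊕ Fin 2) (Φ : Matrix ι κ R) (u : κ → R) : (κ → R) →ₗ[R] R where
  toFun v := brD e Φ u v
  map_add' v w := by
    have := Matrix.det_updateRow_add (brB e Φ u 0) (e.symm (Sum.inr 1)) v w
    simpa [brB_updV, brD] using this
  map_smul' c w := by
    have := Matrix.det_updateRow_smul (brB e Φ u 0) (e.symm (Sum.inr 1)) c w
    simpa [brB_updV, brD] using this

lemma brD_self (e : κ ≃ ι ⊕ Fin 2) (Φ : Matrix ι κ R) (u : κ → R) : brD e Φ u u = 0 := by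
  refine Matrix.det_zero_of_row_eq (i := e.symm (Sum.inr 0)) (j := e.symm (Sum.inr 1)) (by simp) ?_
  ext l; simp [brB_inl, brB_inr0, brB_inr1]

lemma brD_row (e : κ ≃ ι ⊕ Fin 2) (Φ : Matrix ι κ R) (u : κ → R) (j : ι) : brD e Φ u (Φ j) = 0 := by
  refine Matrix.det_zero_of_row_eq (i := e.symm (Sum.inl j)) (j := e.symm (Sum.inr 1)) (by simp) ?_
  ext l; simp [brB_inl, brB_inr0, brB_inr1]

lemma brD_addU (e : κ ≃ ι ⊕ Fin 2) (Φ : Matrix ι κ R) (u u' v : κ → R) :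
    brD e Φ (u + u') v = brD e Φ u v + brD e Φ u' v := by
  have := Matrix.det_updateRow_add (brB e Φ 0 v) (e.symm (Sum.inr 0)) u u'
  simpa [brB_updU, brD] using this

lemma brD_addV (e : κ ≃ ι ⊕ Fin 2) (Φ : Matrix ι κ R) (u v v' : κ → R) :
    brD e Φ u (v + v') = brD e Φ u v + brD e Φ u v' := (brL e Φ u).map_add v v'

lemma brD_swap (e : κ ≃ ι ⊕ Fin 2) (Φ : Matrix ι κ R) (u v : κ → R) :
    brD e Φ u v = - brD e Φ v u := by
  have := brD_self e Φ (u + v)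
  rw [brD_addU, brD_addV, brD_addV, brD_self, brD_self] at this
  linear_combination this

/-- the middle map of the Buchsbaum-Rim complex -/
def brA (e : κ ≃ ι ⊕ Fin 2) (Φ : Matrix ι κ R) : (κ → R) →ₗ[R] (κ → R) :=
  LinearMap.pi fun i => brL e Φ (Pi.single i 1)

lemma brA_apply (e : κ ≃ ι ⊕ Fin 2) (Φ : Matrix ι κ R) (s : κ → R) (i : κ) :
    brA e Φ s i = brD e Φ (Pi.single i 1) s := rfl

lemma brD_eq_sum (e : κ ≃ ι ⊕ Fin 2) (Φ : Matrix ι κ R) (u s : κ → R) :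
    brD e Φ u s = ∑ i, u i * brA e Φ s i := by
  have h : brD e Φ u s = - brL e Φ s u := brD_swap e Φ u s
  rw [h, LinearMap.pi_apply_eq_sum_univ, ← Finset.sum_neg_distrib]
  refine Finset.sum_congr rfl fun i _ => ?_
  rw [brA_apply, brD_swap]
  simp only [smul_eq_mul, mul_neg]
  congr 2
  show brD _ _ _ _ = _
  congr 1
  ext j; simp [Pi.single_apply, eq_comm]

lemma br_phi_A (e : κ ≃ ι ⊕ Fin 2) (Φ : Matrix ι κ R) (s : κ → R) :
    Φ.mulVec (brA e Φ s) = 0 := by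
  ext j
  have := brD_eq_sum e Φ (Φ j) s
  rw [brD_swap, brD_row] at this
  simpa [Matrix.mulVec, dotProduct] using this.symm

lemma br_A_phiT (e : κ ≃ ι ⊕ Fin 2) (Φ : Matrix ι κ R) (t : ι → R) :
    brA e Φ (Φ.transpose.mulVec t) = 0 := by
  ext i
  have h : Φ.transpose.mulVec t = ∑ j, t j • Φ j := by
    ext k; simp [Matrix.mulVec, dotProduct, mul_comm]
  show brL e Φ _ _ = 0
  rw [h, map_sum]
  refine Finset.sum_eq_zero fun j _ => ?_
  rw [map_smul]
  show _ • brD _ _ _ _ = _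
  rw [brD_row, smul_zero]

lemma br_kill2 (e : κ ≃ ι ⊕ Fin 2) (Φ : Matrix ι κ R) (w : κ → R) (hw : brA e Φ w = 0)
    (u v : κ → R) : ∃ t, brD e Φ u v • w = Φ.transpose.mulVec t := by
  have h1 : ∀ u, brD e Φ u w = 0 := fun u => by rw [brD_eq_sum, hw]; simp
  have h2 : Matrix.vecMul (Matrix.vecMul w (brB e Φ u v).adjugate) (brB e Φ u v)
      = brD e Φ u v • w := by
    rw [Matrix.vecMul_vecMul, Matrix.adjugate_mul, Matrix.vecMul_smul, Matrix.vecMul_one]; rfl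
  have h3 : ∀ k, Matrix.vecMul w (brB e Φ u v).adjugate k = ((brB e Φ u v).updateRow k w).det := by
    intro k
    rw [← Matrix.det_transpose, ← Matrix.updateCol_transpose, ← Matrix.cramer_apply,
      Matrix.cramer_eq_adjugate_mulVec, ← Matrix.adjugate_transpose, Matrix.mulVec_transpose]
  refine ⟨fun j => Matrix.vecMul w (brB e Φ u v).adjugate (e.symm (Sum.inl j)), ?_⟩
  rw [← h2]
  ext l
  simp only [Matrix.vecMul, dotProduct, Matrix.mulVec]
  rw [← e.symm.sum_comp, Fintype.sum_sum_type, Fin.sum_univ_two]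
  have e0 := h3 (e.symm (Sum.inr 0))
  have e1 := h3 (e.symm (Sum.inr 1))
  rw [brB_updU] at e0
  rw [brB_updV] at e1
  have e0' : (brB e Φ w v).det = 0 := by have := h1 v; rw [brD_swap, neg_eq_zero] at this; exact this
  have e1' : (brB e Φ u w).det = 0 := h1 u
  rw [e0'] at e0
  rw [e1'] at e1
  simp only [Matrix.vecMul, dotProduct] at e0 e1
  rw [e0, e1]
  simp [brB_inl, brB_inr0, brB_inr1, mul_comm]

lemma br_kill1 (e : κ ≃ ι ⊕ Fin 2) (Φ : Matrix ι κ R) (x : κ → R) (hx : Φ.mulVec x = 0)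
    (u v : κ → R) : ∃ t, brD e Φ u v • x = brA e Φ t := by
  have h2 : (brB e Φ u v).adjugate.mulVec ((brB e Φ u v).mulVec x) = brD e Φ u v • x := by
    rw [Matrix.mulVec_mulVec, Matrix.adjugate_mul, Matrix.smul_mulVec, Matrix.one_mulVec]; rfl
  refine ⟨dotProduct u x • v - dotProduct v x • u, ?_⟩
  rw [← h2]
  ext i
  rw [brA_apply]
  have : brD e Φ (Pi.single i 1) (dotProduct u x • v - dotProduct v x • u) =
     dotProduct u x * brD e Φ (Pi.single i 1) v - dotProduct v x * brD e Φ (Pi.single i 1) u := by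
    have := (brL e Φ (Pi.single i 1)).map_sub (dotProduct u x • v) (dotProduct v x • u)
    rw [map_smul, map_smul] at this
    exact this
  rw [this, brD_swap e Φ (Pi.single i 1) u]
  rw [Matrix.mulVec, dotProduct]
  rw [← e.symm.sum_comp, Fintype.sum_sum_type, Fin.sum_univ_two]
  rw [Matrix.adjugate_apply, Matrix.adjugate_apply, brB_updU, brB_updV]
  have z : ∀ j, (brB e Φ u v).mulVec x (e.symm (Sum.inl j)) = 0 := fun j => by
    have := congrFun hx j
    simpa [Matrix.mulVec, brB_inl, brB_inr0, brB_inr1, dotProduct] using this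
  have z0 : (brB e Φ u v).mulVec x (e.symm (Sum.inr 0)) = dotProduct u x := by
    simp [Matrix.mulVec, brB_inl, brB_inr0, brB_inr1, dotProduct]
  have z1 : (brB e Φ u v).mulVec x (e.symm (Sum.inr 1)) = dotProduct v x := by
    simp [Matrix.mulVec, brB_inl, brB_inr0, brB_inr1, dotProduct]
  simp only [z, z0, z1, mul_zero, Finset.sum_const_zero, zero_add, brD]
  ring

lemma br_kill0 (e : κ ≃ ι ⊕ Fin 2) (Φ : Matrix ι κ R) (y : ι → R)
    (u v : κ → R) : ∃ t, Φ.mulVec t = brD e Φ u v • y := by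
  refine ⟨(brB e Φ u v).adjugate.mulVec (fun k => Sum.elim y 0 (e k)), ?_⟩
  have h2 : (brB e Φ u v).mulVec ((brB e Φ u v).adjugate.mulVec (fun k => Sum.elim y 0 (e k)))
      = brD e Φ u v • (fun k => Sum.elim y 0 (e k)) := by
    rw [Matrix.mulVec_mulVec, Matrix.mul_adjugate, Matrix.smul_mulVec, Matrix.one_mulVec]; rfl
  ext j
  have := congrFun h2 (e.symm (Sum.inl j))
  simp only [Pi.smul_apply, Equiv.apply_symm_apply, Sum.elim_inl] at this
  rw [Pi.smul_apply, ← this]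
  simp [Matrix.mulVec, brB_inl]

/-- ideal of maximal minors -/
def brJ (e : κ ≃ ι ⊕ Fin 2) (Φ : Matrix ι κ R) : Ideal R :=
  Ideal.span (Set.range fun p : (κ → R) × (κ → R) => brD e Φ p.1 p.2)

lemma br_minor (e : κ ≃ ι ⊕ Fin 2) (Φ : Matrix ι κ R) (σ : ι → κ) :
    (Φ.submatrix id σ).det ∈ brJ e Φ := by
  by_cases hσ : Function.Injective σ
  · have hc : Fintype.card (Fin 2) = Fintype.card ((Set.range σ)ᶜ : Set κ) := by
      rw [Fintype.card_compl_set, Set.card_range_of_injective hσ, Fintype.card_congr e]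
      simp
    let ε := Fintype.equivOfCardEq hc
    let τ : ι ⊕ Fin 2 ≃ κ :=
      ((Equiv.ofInjective σ hσ).sumCongr ε).trans (Equiv.Set.sumCompl (Set.range σ))
    have hτ1 : ∀ j, τ (Sum.inl j) = σ j := fun j => by simp [τ]
    let u : κ → R := Pi.single (τ (Sum.inr 0)) 1
    let v : κ → R := Pi.single (τ (Sum.inr 1)) 1
    have key : ((brB e Φ u v).submatrix e.symm τ) =
        Matrix.fromBlocks (Φ.submatrix id σ) (Φ.submatrix id (fun k => τ (Sum.inr k))) 0 1 := by
      ext k l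
      rcases k with k | k
      · rcases l with l | l
        · simp [brB_inl, brB_inr0, brB_inr1, hτ1]
        · simp [brB_inl, brB_inr0, brB_inr1]
      · rcases l with l | l
        · fin_cases k <;> simp [brB_inl, brB_inr0, brB_inr1, u, v]
        · fin_cases k <;> fin_cases l <;> simp [brB_inl, brB_inr0, brB_inr1, u, v]
    have h1 := congrArg Matrix.det key
    rw [Matrix.det_fromBlocks_zero₂₁, Matrix.det_one, mul_one] at h1
    rw [← h1]
    have h2 : (brB e Φ u v).submatrix e.symm τ =
        ((brB e Φ u v).submatrix e.symm e.symm).submatrix id (τ.trans e) := by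
      ext; simp
    rw [h2, Matrix.det_permute', Matrix.det_submatrix_equiv_self]
    exact Ideal.mul_mem_left _ _ (Ideal.subset_span ⟨(u, v), rfl⟩)
  · rw [Function.not_injective_iff] at hσ
    obtain ⟨i, j, h, hij⟩ := hσ
    rw [Matrix.det_zero_of_column_eq hij (by intro k; simp [h])]
    exact zero_mem _

lemma br_pow_mem (e : κ ≃ ι ⊕ Fin 2) (Φ : Matrix ι κ R) (f : R) (S : Matrix κ ι R)
    (hS : Φ * S = f • (1 : Matrix ι ι R)) : f ^ Fintype.card ι ∈ brJ e Φ := by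
  have h0 : (Φ * S).det = f ^ Fintype.card ι := by rw [hS]; simp
  rw [← h0, ← Matrix.det_transpose]
  have h1 : (Φ * S).transpose = fun j => ∑ i, S i j • Φ.transpose i := by
    ext j k; simp [Matrix.mul_apply, mul_comm]
  have h2 : (Φ * S).transpose.det = Matrix.detRowAlternating (fun j => ∑ i, S i j • Φ.transpose i) := by
    rw [← h1]; rfl
  rw [h2, ← AlternatingMap.coe_multilinearMap, MultilinearMap.map_sum]
  refine Ideal.sum_mem _ fun σ _ => ?_
  rw [MultilinearMap.map_smul_univ]
  refine Ideal.mul_mem_left _ _ ?_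
  have := br_minor e Φ σ
  rw [← Matrix.det_transpose] at this
  exact this


lemma br_J2 (e : κ ≃ ι ⊕ Fin 2) (Φ : Matrix ι κ R) (w : κ → R) (hw : brA e Φ w = 0)
    (r : R) (hr : r ∈ brJ e Φ) : ∃ t, r • w = Φ.transpose.mulVec t := by
  refine Submodule.span_induction (p := fun r _ => ∃ t, r • w = Φ.transpose.mulVec t) ?_ ?_ ?_ ?_ hr
  · rintro _ ⟨p, rfl⟩; exact br_kill2 e Φ w hw _ _
  · exact ⟨0, by simp⟩
  · rintro x y _ _ ⟨t, ht⟩ ⟨t', ht'⟩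
    exact ⟨t + t', by rw [add_smul, ht, ht', Matrix.mulVec_add]⟩
  · rintro c x _ ⟨t, ht⟩
    exact ⟨c • t, by rw [smul_assoc, ht, Matrix.mulVec_smul]⟩

lemma br_J1 (e : κ ≃ ι ⊕ Fin 2) (Φ : Matrix ι κ R) (x : κ → R) (hx : Φ.mulVec x = 0)
    (r : R) (hr : r ∈ brJ e Φ) : ∃ t, r • x = brA e Φ t := by
  refine Submodule.span_induction (p := fun r _ => ∃ t, r • x = brA e Φ t) ?_ ?_ ?_ ?_ hr
  · rintro _ ⟨p, rfl⟩; exact br_kill1 e Φ x hx _ _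
  · exact ⟨0, by simp⟩
  · rintro x y _ _ ⟨t, ht⟩ ⟨t', ht'⟩
    exact ⟨t + t', by rw [add_smul, ht, ht', map_add]⟩
  · rintro c x _ ⟨t, ht⟩
    exact ⟨c • t, by rw [smul_assoc, ht, map_smul]⟩

/-- what is needed of a regular sequence -/
structure RegSeq (f g h : R) : Prop where
  f0 : ∀ x, f * x = 0 → x = 0
  fg : ∀ s t, g * s = f * t → ∃ s', s = f * s'
  fgh : ∀ p q o, h * p = g * q - f * o → ∃ p1 p2, p = f * p1 + g * p2

lemma br_ex3 (e : κ ≃ ι ⊕ Fin 2) (Φ : Matrix ι κ R) (f : R) (f0 : ∀ x, f * x = 0 → x = 0)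
    (S : Matrix κ ι R) (hS : Φ * S = f • (1 : Matrix ι ι R)) (t : ι → R)
    (ht : Φ.transpose.mulVec t = 0) : t = 0 := by
  have h1 : (Φ * S).transpose.mulVec t = 0 := by
    rw [Matrix.transpose_mul, ← Matrix.mulVec_mulVec, ht, Matrix.mulVec_zero]
  rw [hS] at h1
  ext j
  apply f0
  have := congrFun h1 j
  simpa [Matrix.smul_mulVec] using this

lemma br_ex2 (e : κ ≃ ι ⊕ Fin 2) (Φ : Matrix ι κ R) (f g h : R) (H : RegSeq f g h)
    (inj : ∀ t, Φ.transpose.mulVec t = 0 → t = 0)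
    (hf : f ∈ brJ e Φ) (hg : g ∈ brJ e Φ) (w : κ → R) (hw : brA e Φ w = 0) :
    ∃ t, w = Φ.transpose.mulVec t := by
  obtain ⟨s, hs⟩ := br_J2 e Φ w hw f hf
  obtain ⟨t, ht⟩ := br_J2 e Φ w hw g hg
  have h1 : g • s - f • t = 0 := by
    apply inj
    rw [Matrix.mulVec_sub, Matrix.mulVec_smul, Matrix.mulVec_smul, ← hs, ← ht, smul_comm, sub_self]
  have h2 : ∀ j, ∃ s', s j = f * s' := fun j => by
    apply H.fg (s j) (t j)
    have := congrFun h1 j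
    simpa [sub_eq_zero] using this
  choose s' hs' using h2
  refine ⟨s', ?_⟩
  have h3 : f • (w - Φ.transpose.mulVec s') = 0 := by
    rw [smul_sub, hs, ← Matrix.mulVec_smul, sub_eq_zero]
    congr 1; ext j; simp [hs']
  rw [← sub_eq_zero]
  ext j
  exact H.f0 _ (by simpa using congrFun h3 j)

lemma br_ex1 (e : κ ≃ ι ⊕ Fin 2) (Φ : Matrix ι κ R) (f g h : R) (H : RegSeq f g h)
    (inj : ∀ t, Φ.transpose.mulVec t = 0 → t = 0)
    (hf : f ∈ brJ e Φ) (hg : g ∈ brJ e Φ) (hh : h ∈ brJ e Φ) (x : κ → R) (hx : Φ.mulVec x = 0) :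
    ∃ t, x = brA e Φ t := by
  obtain ⟨s, hs⟩ := br_J1 e Φ x hx f hf
  obtain ⟨t, ht⟩ := br_J1 e Φ x hx g hg
  obtain ⟨r, hr⟩ := br_J1 e Φ x hx h hh
  have ex2 := br_ex2 e Φ f g h H inj hf hg
  obtain ⟨p, hp⟩ := ex2 (g • s - f • t) (by
    rw [map_sub, map_smul, map_smul, ← hs, ← ht, smul_comm, sub_self])
  obtain ⟨q, hq⟩ := ex2 (h • s - f • r) (by
    rw [map_sub, map_smul, map_smul, ← hs, ← hr, smul_comm, sub_self])
  obtain ⟨o, ho⟩ := ex2 (h • t - g • r) (by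
    rw [map_sub, map_smul, map_smul, ← ht, ← hr, smul_comm, sub_self])
  have h1 : h • p - g • q + f • o = 0 := by
    apply inj
    rw [Matrix.mulVec_add, Matrix.mulVec_sub, Matrix.mulVec_smul, Matrix.mulVec_smul,
      Matrix.mulVec_smul, ← hp, ← hq, ← ho]
    ext k; simp; ring
  have h2 : ∀ j, ∃ p1 p2, p j = f * p1 + g * p2 := fun j => by
    apply H.fgh (p j) (q j) (o j)
    have := congrFun h1 j
    simp at this
    linear_combination this
  choose p1 p2 h12 using h2
  have hpp : p = f • p1 + g • p2 := by ext j; simp [h12]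
  have h3 : ∀ k, ∃ s', (s - Φ.transpose.mulVec p2) k = f * s' := fun k => by
    apply H.fg _ ((t + Φ.transpose.mulVec p1) k)
    rw [hpp, Matrix.mulVec_add, Matrix.mulVec_smul, Matrix.mulVec_smul] at hp
    have := congrFun hp k
    simp at this
    simp
    linear_combination this
  choose s' hs' using h3
  refine ⟨s', ?_⟩
  have h4 : s - Φ.transpose.mulVec p2 = f • s' := by ext k; rw [hs']; simp
  have h5 := congrArg (brA e Φ) h4
  rw [map_sub, br_A_phiT, sub_zero, ← hs, map_smul, ← sub_eq_zero, ← smul_sub] at h5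
  rw [← sub_eq_zero]
  ext j
  exact H.f0 _ (by simpa using congrFun h5 j)

/-- a matrix with a zero column and finite colength is surjective -/
lemma br_zero_col (e : κ ≃ ι ⊕ Fin 2) (Φ : Matrix ι κ R) (f g h : R) (H : RegSeq f g h)
    (inj : ∀ t, Φ.transpose.mulVec t = 0 → t = 0)
    (hf : f ∈ brJ e Φ) (hg : g ∈ brJ e Φ) (hh : h ∈ brJ e Φ) (k : κ) (hk : ∀ j, Φ j k = 0)
    (y : ι → R) : ∃ x, Φ.mulVec x = y := by
  obtain ⟨t, ht⟩ := br_ex1 e Φ f g h H inj hf hg hh (Pi.single k 1) (by ext j; simp [hk])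
  obtain ⟨x, hx⟩ := br_kill0 e Φ y (Pi.single k 1) t
  refine ⟨x, ?_⟩
  rw [hx, ← brA_apply, ← ht]
  simp

end BR

section Poly
variable {K : Type*} [Field K]

lemma regSeq_X (M : ℕ) : RegSeq (X 0 ^ M : MvPolynomial (Fin 3) K) (X 1 ^ M) (X 2 ^ M) where
  f0 x hx := by
    rcases mul_eq_zero.1 hx with h | h
    · exact absurd h (pow_ne_zero _ (X_ne_zero _))
    · exact h
  fg s t h := by
    have hp : Prime (X 0 : MvPolynomial (Fin 3) K) := MvPolynomial.X_prime
    have h1 : (X 0 : MvPolynomial (Fin 3) K) ^ M ∣ X 1 ^ M * s := ⟨t, h⟩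
    have h2 : ¬ (X 0 : MvPolynomial (Fin 3) K) ∣ X 1 ^ M := by
      intro h3
      have := hp.dvd_of_dvd_pow h3
      rw [MvPolynomial.X_dvd_X] at this
      simp at this
    exact hp.pow_dvd_of_dvd_mul_left M h2 h1
  fgh p q o h := by
    let T : Set (Fin 3 →₀ ℕ) := {Finsupp.single 0 M, Finsupp.single 1 M}
    have hT : Ideal.span ((fun s => monomial s (1 : K)) '' T) =
        Ideal.span {(X 0 ^ M : MvPolynomial (Fin 3) K), X 1 ^ M} := by
      simp [T, Set.image_pair, X_pow_eq_monomial]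
    have h1 : X 2 ^ M * p ∈ Ideal.span ((fun s => monomial s (1 : K)) '' T) := by
      rw [hT, Ideal.mem_span_pair]
      exact ⟨-o, q, by rw [h]; ring⟩
    have h2 : p ∈ Ideal.span ((fun s => monomial s (1 : K)) '' T) := by
      rw [MvPolynomial.mem_ideal_span_monomial_image] at h1 ⊢
      intro xi hxi
      obtain ⟨si, hsi, hle⟩ := h1 (Finsupp.single 2 M + xi) (by
        rw [mem_support_iff, X_pow_eq_monomial, coeff_monomial_mul, one_mul]
        exact mem_support_iff.1 hxi)
      refine ⟨si, hsi, ?_⟩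
      rcases hsi with rfl | (rfl : _ = _)
      · rw [Finsupp.single_le_iff] at hle ⊢; simpa using hle
      · rw [Finsupp.single_le_iff] at hle ⊢; simpa using hle
    rw [hT, Ideal.mem_span_pair] at h2
    obtain ⟨p1, p2, h3⟩ := h2
    exact ⟨p1, p2, by rw [← h3]; ring⟩

abbrev WH (K : Type*) [Field K] (e : ℤ) : Submodule K (MvPolynomial (Fin 3) K) :=
  weightedHomogeneousSubmodule K (fun _ : Fin 3 => (1 : ℤ)) e

lemma wt_eq (d : Fin 3 →₀ ℕ) : Finsupp.weight (fun _ : Fin 3 => (1 : ℤ)) d = (∑ i, d i : ℕ) := by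
  rw [Finsupp.weight_apply, Finsupp.sum_fintype] <;> simp

lemma WH_set (e : ℕ) : {d : Fin 3 →₀ ℕ | Finsupp.weight (fun _ : Fin 3 => (1 : ℤ)) d = (e : ℤ)} =
    ((Finset.univ : Finset (Fin 3)).finsuppAntidiag e : Set (Fin 3 →₀ ℕ)) := by
  ext d
  rw [Set.mem_ofPred_eq, wt_eq]
  simp only [Finset.mem_coe, Finset.mem_finsuppAntidiag, Finset.subset_univ, and_true]
  exact_mod_cast Iff.rfl

lemma WH_neg (e : ℤ) (he : e < 0) : WH K e = ⊥ := by
  rw [eq_bot_iff]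
  intro p hp
  rw [mem_weightedHomogeneousSubmodule] at hp
  rw [Submodule.mem_bot]
  ext d
  rw [coeff_zero]
  by_contra h
  have := hp h
  rw [wt_eq] at this
  omega

noncomputable def WH_equiv (e : ℕ) : WH K (e : ℤ) ≃ₗ[K]
    (((Finset.univ : Finset (Fin 3)).finsuppAntidiag e : Set (Fin 3 →₀ ℕ)) →₀ K) :=
  (LinearEquiv.ofEq _ _ (by
    rw [WH, weightedHomogeneousSubmodule_eq_finsupp_supported, WH_set])).trans
    (AddMonoidAlgebra.supportedEquivFinsupp _)

instance WH_fin (e : ℤ) : FiniteDimensional K (WH K e) := by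
  rcases lt_or_ge e 0 with h | h
  · rw [WH_neg e h]; infer_instance
  · lift e to ℕ using h
    exact Module.Finite.equiv (WH_equiv (K := K) e).symm

lemma WH_rank (e : ℕ) : Module.finrank K (WH K (e : ℤ)) = (e + 2).choose 2 := by
  rw [(WH_equiv (K := K) e).finrank_eq, Module.finrank_finsupp_self]
  have := Finset.card_finsuppAntidiag_nat_eq_choose (s := (Finset.univ : Finset (Fin 3))) e
  simp only [Finset.card_univ, Fintype.card_fin] at this
  have h2 : (3 + e - 1) = e + 2 := by omega
  rw [h2, Nat.choose_symm_add] at this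
  simpa using this

lemma WH_diff (e : ℤ) : (Module.finrank K (WH K e) : ℤ) - Module.finrank K (WH K (e - 1)) = max (e + 1) 0 := by
  rcases lt_trichotomy e 0 with h | h | h
  · rw [WH_neg e h, WH_neg (e-1) (by omega)]; simp; omega
  · subst h
    rw [WH_neg (0-1) (by omega)]
    have := WH_rank (K := K) 0
    simp at this; simp [this]
  · obtain ⟨m, rfl⟩ : ∃ m : ℕ, e = ((m + 1 : ℕ) : ℤ) := ⟨(e - 1).toNat, by omega⟩
    have h2 : ((m + 1 : ℕ) : ℤ) - 1 = (m : ℤ) := by push_cast; ring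
    rw [h2, WH_rank, WH_rank]
    have := Nat.choose_succ_succ' (m+2) 1
    rw [show m + 1 + 2 = m + 2 + 1 by ring, this]
    simp; omega

lemma WH_comp_mul (p q : MvPolynomial (Fin 3) K) (i j : ℤ)
    (hp : IsWeightedHomogeneous (fun _ : Fin 3 => (1 : ℤ)) p i) :
    weightedHomogeneousComponent (fun _ : Fin 3 => (1 : ℤ)) (i + j) (p * q) =
    p * weightedHomogeneousComponent (fun _ : Fin 3 => (1 : ℤ)) j q := by
  let _ := MvPolynomial.weightedGradedAlgebra (R := K) (fun _ : Fin 3 => (1 : ℤ))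
  have := DirectSum.coe_decompose_mul_add_of_left_mem
    (weightedHomogeneousSubmodule K (fun _ : Fin 3 => (1 : ℤ))) (i := i) (j := j) (a := p) (b := q) hp
  have h2 : ∀ r m, ((DirectSum.decompose (weightedHomogeneousSubmodule K
      (fun _ : Fin 3 => (1 : ℤ))) r m : _) : MvPolynomial (Fin 3) K) =
      weightedHomogeneousComponent (fun _ : Fin 3 => (1 : ℤ)) m r := fun r m =>
    MvPolynomial.decompose'_apply K (fun _ : Fin 3 => (1 : ℤ)) r m
  rw [h2, h2] at this
  exact this

end Poly

section Num
open Finset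

/-- truncated ramp -/
def ramp (c s u : ℤ) : ℤ := max (s - u) 0 - max (s - (c - u)) 0

lemma sum_ge_fiber {α β : Type} [Fintype α] [Fintype β] (a : α → ℤ) (b : β → ℤ) (t : ℤ)
    (h : ∀ e, t < e → #{j | b j = e} ≤ #{i | a i = e}) (G : ℤ → ℤ) (hG : ∀ u, 0 ≤ G u) :
    ∑ j with t < b j, G (b j) ≤ ∑ i with t < a i, G (a i) := by
  classical
  set E : Finset ℤ := (univ.image a ∪ univ.image b).filter (t < ·)
  have key : ∀ {γ : Type} [Fintype γ] (f : γ → ℤ) (_ : ∀ g, t < f g → f g ∈ E),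
      ∑ j with t < f j, G (f j) = ∑ e ∈ E, (#{j | f j = e} : ℤ) * G e := by
    intro γ _ f hf
    rw [← sum_fiberwise_of_maps_to (g := f) (t := E) (by intro g hg; exact hf g (by simpa using hg))]
    refine sum_congr rfl fun e he => ?_
    have ht : t < e := (mem_filter.1 he).2
    rw [filter_filter]
    have : (univ.filter fun j => t < f j ∧ f j = e) = univ.filter fun j => f j = e := by
      ext j; simp; rintro rfl; exact ht
    rw [this, sum_congr rfl (g := fun _ => G e) (by intro x hx; rw [(mem_filter.1 hx).2])]
    simp
  rw [key b (by intro g hg; simp [E, hg]), key a (by intro g hg; simp [E, hg])]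
  refine sum_le_sum fun e he => ?_
  have := h e (mem_filter.1 he).2
  exact mul_le_mul_of_nonneg_right (by exact_mod_cast this) (hG e)

lemma max_lo (m s u : ℤ) (hm : m ≤ u) (hms : m ≤ s) :
    max (s - u) 0 = ∑ t ∈ Ico m s, if u ≤ t then (1 : ℤ) else 0 := by
  rw [← sum_filter]
  have : (Ico m s).filter (fun t => u ≤ t) = Ico u s := by ext; simp; omega
  rw [this]; simp

lemma max_hi (M r u : ℤ) (hm : u ≤ M) (hms : r ≤ M) :
    max (u - r) 0 = ∑ t ∈ Ico r M, if t < u then (1 : ℤ) else 0 := by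
  rw [← sum_filter]
  have : (Ico r M).filter (fun t => t < u) = Ico r u := by ext; simp; omega
  rw [this]; simp

lemma numeric (n : ℕ) (a : Fin (n + 2) → ℤ) (b : Fin n → ℤ) (c : ℤ)
    (hc : c = ∑ i, a i - ∑ j, b j)
    (H : ∀ t, #{i | a i ≤ t} ≤ #{j | b j ≤ t} ∨ ∀ e, t < e → #{j | b j = e} ≤ #{i | a i = e})
    (s : ℤ) (hs : 2 * s ≤ c) : ∑ i, ramp c s (a i) ≤ ∑ j, ramp c s (b j) := by
  classical
  have ca : ∀ t, #{i | a i ≤ t} + #{i | t < a i} = n + 2 := fun t => by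
    have := card_filter_add_card_filter_not (s := (univ : Finset (Fin (n+2)))) (fun i => a i ≤ t)
    simpa using this
  have cb : ∀ t, #{i | b i ≤ t} + #{i | t < b i} = n := fun t => by
    have := card_filter_add_card_filter_not (s := (univ : Finset (Fin n))) (fun i => b i ≤ t)
    simpa using this
  by_cases h1 : ∀ t, t < s → #{i | a i ≤ t} ≤ #{j | b j ≤ t}
  · obtain ⟨m, hm⟩ := ((univ.image a ∪ univ.image b) ∪ {s, c - s}).bddBelow
    obtain ⟨M, hM⟩ := ((univ.image a ∪ univ.image b) ∪ {s, c - s}).bddAbove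
    have ma : ∀ i, m ≤ a i := fun i => hm (by simp)
    have mb : ∀ i, m ≤ b i := fun i => hm (by simp)
    have ms : m ≤ s := hm (by simp)
    have Ma : ∀ i, a i ≤ M := fun i => hM (by simp)
    have Mb : ∀ i, b i ≤ M := fun i => hM (by simp)
    have Ms : c - s ≤ M := hM (by simp)
    have h2 : ∑ i, max (s - a i) 0 ≤ ∑ j, max (s - b j) 0 := by
      rw [sum_congr rfl (fun i _ => max_lo m s (a i) (ma i) ms),
        sum_congr rfl (fun i _ => max_lo m s (b i) (mb i) ms), sum_comm, sum_comm (s := univ (α := Fin n))]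
      refine sum_le_sum fun t ht => ?_
      have := h1 t (mem_Ico.1 ht).2
      simp only [sum_boole]
      exact_mod_cast this
    have h3 : ∑ j, max (b j - (c - s)) 0 ≤ ∑ i, max (a i - (c - s)) 0 := by
      rw [sum_congr rfl (fun i _ => max_hi M (c-s) (a i) (Ma i) Ms),
        sum_congr rfl (fun i _ => max_hi M (c-s) (b i) (Mb i) Ms), sum_comm, sum_comm (s := univ (α := Fin (n+2)))]
      refine sum_le_sum fun t ht => ?_
      have : #{j | t < b j} ≤ #{i | t < a i} := by
        rcases H t with h | h
        · have := ca t; have := cb t; omega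
        · have := sum_ge_fiber a b t h (fun _ => 1) (by simp)
          simpa using this
      simp only [sum_boole]
      exact_mod_cast this
    have e : ∀ u, ramp c s u = max (s - u) 0 - max (u - (c - s)) 0 := fun u => by
      rw [ramp]; congr 2; ring
    simp only [e, sum_sub_distrib]
    linarith
  · push Not at h1
    obtain ⟨t, hts, h2⟩ := h1
    have h3 := (H t).resolve_left (by omega)
    have h4 := sum_ge_fiber a b t h3 (fun u => (c - s - u) - ramp c s u) (by
      intro u; simp only [ramp]; omega)
    have sp : ∀ {γ : Type} [Fintype γ] (f : γ → ℤ), ∑ j, ramp c s (f j) =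
        ∑ j, (c - s - f j) - (c - 2 * s) * #{j | f j ≤ t} - ∑ j with t < f j, ((c - s - f j) - ramp c s (f j)) := by
      intro γ _ f
      have e1 : ((c - 2 * s) * #{j | f j ≤ t} : ℤ) = ∑ j, if f j ≤ t then (c - 2 * s) else 0 := by
        rw [← sum_filter]; simp; ring
      rw [e1, sum_filter, ← sum_sub_distrib, ← sum_sub_distrib]
      refine sum_congr rfl fun j _ => ?_
      by_cases hj : f j ≤ t
      · rw [if_pos hj, if_neg (by omega)]; simp only [ramp]; omega
      · rw [if_neg hj, if_pos (by omega)]; ring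
    rw [sp a, sp b]
    have h5 : ∑ i, (c - s - a i) = (n + 2) * (c - s) - ∑ i, a i := by simp; ring
    have h6 : ∑ i, (c - s - b i) = n * (c - s) - ∑ i, b i := by simp; ring
    rw [h5, h6]
    have h7 : (c - 2 * s) * ((#{j | b j ≤ t} : ℤ) + 1) ≤ (c - 2 * s) * #{i | a i ≤ t} :=
      mul_le_mul_of_nonneg_left (by exact_mod_cast h2) (by omega)
    linarith

lemma ramp_symm (n : ℕ) (a : Fin (n + 2) → ℤ) (b : Fin n → ℤ) (c : ℤ)
    (hc : c = ∑ i, a i - ∑ j, b j) (s : ℤ) :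
    ∑ j, ramp c s (b j) - ∑ i, ramp c s (a i) =
    -(∑ j, ramp c (c - s) (b j) - ∑ i, ramp c (c - s) (a i)) := by
  have e : ∀ u, ramp c s u = (c - 2 * u) - ramp c (c - s) u := fun u => by
    simp only [ramp]; omega
  simp only [e, sum_sub_distrib, ← mul_sum]
  simp
  linarith
end Num

section Assembly
variable {K : Type*} [Field K]

/-- multiplication by a matrix as a `K`-linear map -/
noncomputable def mlin {m m' : ℕ} (Ψ : Matrix (Fin m) (Fin m') (MvPolynomial (Fin 3) K)) :
    (Fin m' → MvPolynomial (Fin 3) K) →ₗ[K] (Fin m → MvPolynomial (Fin 3) K) :=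
  (Matrix.mulVecLin Ψ).restrictScalars K

lemma mlin_apply {m m' : ℕ} (Ψ : Matrix (Fin m) (Fin m') (MvPolynomial (Fin 3) K)) (x) :
    mlin Ψ x = Ψ.mulVec x := rfl

lemma mlin_mem {m m' : ℕ} (Ψ : Matrix (Fin m) (Fin m') (MvPolynomial (Fin 3) K))
    (α : Fin m' → ℤ) (β : Fin m → ℤ) (hΨ : ∀ j i, homog (Ψ j i) (α i - β j)) (d : ℤ)
    (x) (hx : x ∈ degPiece (K := K) m' α d) : Ψ.mulVec x ∈ degPiece (K := K) m β d := by
  rw [mem_degPiece] at hx ⊢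
  intro j
  refine IsWeightedHomogeneous.sum _ _ _ fun i _ => ?_
  have := (hΨ j i).mul (hx i)
  have e : α i - β j + (d - α i) = d - β j := by ring
  rw [e] at this
  exact this

lemma mlin_lift {m m' : ℕ} (Ψ : Matrix (Fin m) (Fin m') (MvPolynomial (Fin 3) K))
    (α : Fin m' → ℤ) (β : Fin m → ℤ) (hΨ : ∀ j i, homog (Ψ j i) (α i - β j)) (d : ℤ)
    (x) (hx : Ψ.mulVec x ∈ degPiece (K := K) m β d) :
    ∃ x' ∈ degPiece (K := K) m' α d, Ψ.mulVec x' = Ψ.mulVec x := by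
  refine ⟨fun i => weightedHomogeneousComponent (fun _ : Fin 3 => (1 : ℤ)) (d - α i) (x i), ?_, ?_⟩
  · rw [mem_degPiece]
    intro i
    exact weightedHomogeneousComponent_isWeightedHomogeneous _ _
  · rw [mem_degPiece] at hx
    ext1 j
    have h1 := (hx j).weightedHomogeneousComponent_same
    rw [← h1]
    simp only [Matrix.mulVec, dotProduct, map_sum]
    refine Finset.sum_congr rfl fun i _ => ?_
    rw [← WH_comp_mul _ _ _ _ (hΨ j i)]
    congr 2; ring

lemma mlin_exact {m1 m2 m3 : ℕ} (Ψ1 : Matrix (Fin m2) (Fin m1) (MvPolynomial (Fin 3) K))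
    (Ψ2 : Matrix (Fin m3) (Fin m2) (MvPolynomial (Fin 3) K))
    (α : Fin m1 → ℤ) (β : Fin m2 → ℤ) (hΨ : ∀ j i, homog (Ψ1 j i) (α i - β j)) (d : ℤ)
    (hz : ∀ x, Ψ2.mulVec (Ψ1.mulVec x) = 0)
    (hex : ∀ x, Ψ2.mulVec x = 0 → ∃ y, x = Ψ1.mulVec y) :
    degPiece (K := K) m2 β d ⊓ LinearMap.ker (mlin Ψ2) =
      (degPiece (K := K) m1 α d).map (mlin Ψ1) := by
  ext x
  constructor
  · rintro ⟨h1, h2⟩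
    obtain ⟨y, rfl⟩ := hex x h2
    obtain ⟨y', hy', h3⟩ := mlin_lift Ψ1 α β hΨ d y h1
    exact ⟨y', hy', h3⟩
  · rintro ⟨y, hy, rfl⟩
    exact ⟨mlin_mem Ψ1 α β hΨ d y hy, hz y⟩

/-- graded piece as a product -/
def degEquiv (N : ℕ) (a : Fin N → ℤ) (d : ℤ) :
    degPiece (K := K) N a d ≃ₗ[K] (∀ i, WH K (d - a i)) where
  toFun v i := ⟨v.1 i, v.2 i trivial⟩
  invFun v := ⟨fun i => v i, fun i _ => (v i).2⟩
  left_inv _ := rfl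
  right_inv _ := rfl
  map_add' _ _ := rfl
  map_smul' _ _ := rfl

instance degPiece_fin (N : ℕ) (a : Fin N → ℤ) (d : ℤ) :
    FiniteDimensional K (degPiece (K := K) N a d) :=
  Module.Finite.equiv (degEquiv (K := K) N a d).symm

lemma degPiece_rank (N : ℕ) (a : Fin N → ℤ) (d : ℤ) :
    Module.finrank K (degPiece (K := K) N a d) = ∑ i, Module.finrank K (WH K (d - a i)) := by
  rw [(degEquiv N a d).finrank_eq, Module.finrank_pi_fintype]

lemma degPiece_diff (N : ℕ) (a : Fin N → ℤ) (d : ℤ) :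
    (Module.finrank K (degPiece (K := K) N a d) : ℤ) - Module.finrank K (degPiece (K := K) N a (d - 1))
      = ∑ i, max (d + 1 - a i) 0 := by
  rw [degPiece_rank, degPiece_rank]
  push_cast
  rw [← Finset.sum_sub_distrib]
  refine Finset.sum_congr rfl fun i _ => ?_
  have := WH_diff (K := K) (d - a i)
  rw [show d - 1 - a i = d - a i - 1 by ring, this]
  congr 1; ring

lemma rank_null {V W : Type*} [AddCommGroup V] [Module K V] [AddCommGroup W] [Module K W]
    (L : V →ₗ[K] W) (P : Submodule K V) [FiniteDimensional K P] :
    Module.finrank K (P.map L) + Module.finrank K ↥(P ⊓ LinearMap.ker L) = Module.finrank K P := by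
  have h := LinearMap.finrank_range_add_finrank_ker (L.domRestrict P)
  rw [LinearMap.range_domRestrict] at h
  rw [← h]
  congr 1
  have : LinearMap.ker (L.domRestrict P) = (LinearMap.ker L).comap P.subtype := by
    ext; simp
  rw [this]
  have h2 : (P ⊓ LinearMap.ker L) = ((LinearMap.ker L).comap P.subtype).map P.subtype := by
    rw [Submodule.map_comap_subtype]
  rw [h2]
  exact LinearEquiv.finrank_eq (Submodule.equivMapOfInjective _ P.subtype_injective _).symm

lemma Md_rank (n : ℕ) (a : Fin (n + 2) → ℤ) (b : Fin n → ℤ)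
    (Φ : Matrix (Fin n) (Fin (n + 2)) (MvPolynomial (Fin 3) K))
    (hΦ : ∀ j i, homog (Φ j i) (a i - b j)) (d : ℤ) :
    Module.finrank K (Md n a b Φ d) + Module.finrank K ((degPiece (K := K) (n+2) a d).map (mlin Φ))
      = Module.finrank K (degPiece (K := K) n b d) := by
  have h := Submodule.finrank_quotient_add_finrank (MdSub n a b Φ d)
  rw [← h]
  congr 1
  have hle : (degPiece (K := K) (n+2) a d).map (mlin Φ) ≤ degPiece (K := K) n b d := by
    rintro _ ⟨y, hy, rfl⟩
    exact mlin_mem Φ a b hΦ d y hy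
  exact (Submodule.comapSubtypeEquivOfLe hle).finrank_eq.symm

/-- the canonical splitting of the columns -/
def eqv (n : ℕ) : Fin (n + 2) ≃ Fin n ⊕ Fin 2 := finSumFinEquiv.symm

/-- matrix of `brA` -/
noncomputable def Amat (n : ℕ) (Φ : Matrix (Fin n) (Fin (n + 2)) (MvPolynomial (Fin 3) K)) :
    Matrix (Fin (n+2)) (Fin (n + 2)) (MvPolynomial (Fin 3) K) :=
  Matrix.of fun i k => brD (eqv n) Φ (Pi.single i 1) (Pi.single k 1)

lemma Amat_mulVec (n : ℕ) (Φ : Matrix (Fin n) (Fin (n + 2)) (MvPolynomial (Fin 3) K)) (x) :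
    (Amat n Φ).mulVec x = brA (eqv n) Φ x := by
  have : Amat n Φ = LinearMap.toMatrix' (brA (eqv n) Φ) := by
    ext i k : 2
    rw [LinearMap.toMatrix'_apply, brA_apply, Amat, Matrix.of_apply]
  rw [this, LinearMap.toMatrix'_mulVec]

lemma det_homog {ι : Type*} [Fintype ι] [DecidableEq ι] (B : Matrix ι ι (MvPolynomial (Fin 3) K))
    (α ρ : ι → ℤ) (h : ∀ k l, homog (B k l) (α l - ρ k)) : homog B.det (∑ l, α l - ∑ k, ρ k) := by
  rw [Matrix.det_apply]
  refine IsWeightedHomogeneous.sum _ _ _ fun σ _ => ?_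
  have h1 := IsWeightedHomogeneous.prod Finset.univ (fun i => B (σ i) i) (fun i => α i - ρ (σ i))
    (fun i _ => h (σ i) i)
  rw [Finset.sum_sub_distrib, Equiv.sum_comp σ ρ] at h1
  rcases Int.units_eq_one_or (Equiv.Perm.sign σ) with hs | hs
  · rw [hs, one_smul]; exact h1
  · rw [hs, Units.neg_smul, one_smul]; exact h1.neg

lemma homog_single {N : ℕ} (a : Fin N → ℤ) (i l : Fin N) :
    homog ((Pi.single i 1 : Fin N → MvPolynomial (Fin 3) K) l) (a l - a i) := by
  by_cases h : l = i
  · subst h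
    simpa [homog] using isWeightedHomogeneous_one K (fun _ : Fin 3 => (1 : ℤ))
  · rw [Pi.single_eq_of_ne h]
    exact isWeightedHomogeneous_zero _ _ _

lemma Amat_homog (n : ℕ) (a : Fin (n + 2) → ℤ) (b : Fin n → ℤ)
    (Φ : Matrix (Fin n) (Fin (n + 2)) (MvPolynomial (Fin 3) K))
    (hΦ : ∀ j i, homog (Φ j i) (a i - b j)) (i k : Fin (n+2)) :
    homog (Amat n Φ i k) (∑ i, a i - ∑ j, b j - a k - a i) := by
  have h := det_homog (brB (eqv n) Φ (Pi.single i 1) (Pi.single k 1)) a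
    (fun l => Sum.elim b ![a i, a k] (eqv n l)) (by
      intro r l
      obtain ⟨r, rfl⟩ := (eqv n).symm.surjective r
      rw [Equiv.apply_symm_apply]
      rcases r with r | r
      · rw [brB_inl]; exact hΦ r l
      · fin_cases r
        · simp only [Fin.zero_eta]
          rw [brB_inr0]; exact homog_single a i l
        · simp only [Fin.mk_one]
          rw [brB_inr1]; exact homog_single a k l)
  rw [Equiv.sum_comp (eqv n) (fun x => Sum.elim b ![a i, a k] x), Fintype.sum_sum_type,
    Fin.sum_univ_two] at h
  simp only [Sum.elim_inl, Sum.elim_inr, Matrix.cons_val_zero, Matrix.cons_val_one] at h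
  have e : ∑ i, a i - ∑ j, b j - a k - a i = ∑ l, a l - (∑ j, b j + (a i + a k)) := by ring
  rw [e]
  exact h

lemma exists_S (n : ℕ) (a : Fin (n + 2) → ℤ) (b : Fin n → ℤ)
    (Φ : Matrix (Fin n) (Fin (n + 2)) (MvPolynomial (Fin 3) K))
    (hfin : FiniteColength n a b Φ) : ∃ N : ℕ, ∀ k : Fin 3, ∃ S : Matrix (Fin (n+2)) (Fin n) (MvPolynomial (Fin 3) K),
      Φ * S = (X k ^ N : MvPolynomial (Fin 3) K) • (1 : Matrix (Fin n) (Fin n) (MvPolynomial (Fin 3) K)) := by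
  obtain ⟨D, hD⟩ := hfin
  let N : ℕ := ∑ j, (D - b j).toNat
  have hN : ∀ j, D - b j ≤ N := fun j => by
    have : (D - b j).toNat ≤ N :=
      Finset.single_le_sum (f := fun j => (D - b j).toNat) (fun _ _ => Nat.zero_le _) (Finset.mem_univ j)
    omega
  refine ⟨N, fun k => ?_⟩
  have h1 : ∀ j : Fin n, ∃ x, Φ.mulVec x = Pi.single j (X k ^ N : MvPolynomial (Fin 3) K) := by
    intro j
    have hm : (Pi.single j (X k ^ N : MvPolynomial (Fin 3) K)) ∈ degPiece (K := K) n b (N + b j) := by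
      rw [mem_degPiece]
      intro i
      by_cases h : i = j
      · subst h
        rw [Pi.single_eq_same]
        have := (isWeightedHomogeneous_X K (fun _ : Fin 3 => (1 : ℤ)) k).pow N
        simpa [homog] using this
      · rw [Pi.single_eq_of_ne h]
        exact isWeightedHomogeneous_zero _ _ _
    obtain ⟨x, _, hx⟩ := hD (N + b j) (by have := hN j; omega) hm
    exact ⟨x, hx⟩
  choose x hx using h1
  refine ⟨Matrix.of fun i j => x j i, ?_⟩
  refine Matrix.ext fun i j => ?_
  have := congrFun (hx j) i
  rw [Matrix.mul_apply]
  simp only [Matrix.mulVec, dotProduct] at this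
  simp only [Matrix.of_apply, this, Matrix.smul_apply, Matrix.one_apply, Pi.single_apply, smul_eq_mul,
    mul_ite, mul_one, mul_zero]

/-- all hypotheses for exactness -/
lemma br_all {ι κ : Type*} [Fintype ι] [Fintype κ] [DecidableEq ι] [DecidableEq κ]
    (e : κ ≃ ι ⊕ Fin 2) (Φ : Matrix ι κ (MvPolynomial (Fin 3) K)) (N : ℕ)
    (hS : ∀ k : Fin 3, ∃ S : Matrix κ ι (MvPolynomial (Fin 3) K),
      Φ * S = (X k ^ N : MvPolynomial (Fin 3) K) • (1 : Matrix ι ι (MvPolynomial (Fin 3) K))) :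
    ∃ f g h : MvPolynomial (Fin 3) K, RegSeq f g h ∧ (∀ t, Φ.transpose.mulVec t = 0 → t = 0) ∧
      f ∈ brJ e Φ ∧ g ∈ brJ e Φ ∧ h ∈ brJ e Φ := by
  have hm : ∀ k : Fin 3, (X k ^ (N * Fintype.card ι) : MvPolynomial (Fin 3) K) ∈ brJ e Φ := by
    intro k
    obtain ⟨S, hS⟩ := hS k
    rw [pow_mul]
    exact br_pow_mem e Φ _ S hS
  refine ⟨_, _, _, regSeq_X (N * Fintype.card ι), ?_, hm 0, hm 1, hm 2⟩
  obtain ⟨S, hS⟩ := hS 0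
  exact fun t ht => br_ex3 e Φ _ (regSeq_X N).f0 S hS t ht

lemma hilbert (n : ℕ) (a : Fin (n + 2) → ℤ) (b : Fin n → ℤ)
    (Φ : Matrix (Fin n) (Fin (n + 2)) (MvPolynomial (Fin 3) K))
    (hΦ : ∀ j i, homog (Φ j i) (a i - b j))
    (hfin : FiniteColength n a b Φ) (c : ℤ) (hc : c = ∑ i, a i - ∑ j, b j) (d : ℤ) :
    (Module.finrank K (Md n a b Φ d) : ℤ) = Module.finrank K (degPiece (K := K) n b d)
      - Module.finrank K (degPiece (K := K) (n+2) a d)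
      + Module.finrank K (degPiece (K := K) (n+2) (fun i => c - a i) d)
      - Module.finrank K (degPiece (K := K) n (fun j => c - b j) d) := by
  obtain ⟨N, hS⟩ := exists_S n a b Φ hfin
  obtain ⟨f, g, h, H, inj, hf, hg, hh⟩ := br_all (eqv n) Φ N hS
  have e1 := mlin_exact (Amat n Φ) Φ (fun i => c - a i) a (by
      intro j i
      have := Amat_homog n a b Φ hΦ j i
      rw [← hc] at this
      exact this) d (by intro x; rw [Amat_mulVec]; exact br_phi_A _ _ _)
      (by intro x hx; simp only [Amat_mulVec]; exact br_ex1 _ Φ f g h H inj hf hg hh x hx)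
  have e2 := mlin_exact Φ.transpose (Amat n Φ) (fun j => c - b j) (fun i => c - a i) (by
      intro j i
      have := hΦ i j
      rw [show c - b i - (c - a j) = a j - b i by ring]
      exact this) d (by intro x; rw [Amat_mulVec]; exact br_A_phiT _ _ _)
      (by intro x hx; rw [Amat_mulVec] at hx; exact br_ex2 _ Φ f g h H inj hf hg x hx)
  have e3 : degPiece (K := K) n (fun j => c - b j) d ⊓ LinearMap.ker (mlin Φ.transpose) = ⊥ := by
    rw [eq_bot_iff]
    rintro x ⟨_, hx⟩
    exact inj x hx
  have r0 := Md_rank n a b Φ hΦ d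
  have r1 := rank_null (mlin Φ) (degPiece (K := K) (n+2) a d)
  have r2 := rank_null (mlin (Amat n Φ)) (degPiece (K := K) (n+2) (fun i => c - a i) d)
  have r3 := rank_null (mlin Φ.transpose) (degPiece (K := K) n (fun j => c - b j) d)
  rw [e1] at r1
  rw [e2] at r2
  rw [e3, finrank_bot] at r3
  omega

lemma hilbert_diff (n : ℕ) (a : Fin (n + 2) → ℤ) (b : Fin n → ℤ)
    (Φ : Matrix (Fin n) (Fin (n + 2)) (MvPolynomial (Fin 3) K))
    (hΦ : ∀ j i, homog (Φ j i) (a i - b j))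
    (hfin : FiniteColength n a b Φ) (c : ℤ) (hc : c = ∑ i, a i - ∑ j, b j) (d : ℤ) :
    (Module.finrank K (Md n a b Φ d) : ℤ) - Module.finrank K (Md n a b Φ (d - 1)) =
      ∑ j, ramp c (d + 1) (b j) - ∑ i, ramp c (d + 1) (a i) := by
  rw [hilbert n a b Φ hΦ hfin c hc, hilbert n a b Φ hΦ hfin c hc]
  have h1 := degPiece_diff (K := K) n b d
  have h2 := degPiece_diff (K := K) (n+2) a d
  have h3 := degPiece_diff (K := K) (n+2) (fun i => c - a i) d
  have h4 := degPiece_diff (K := K) n (fun i => c - b i) d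
  simp only [ramp, Finset.sum_sub_distrib]
  linarith


lemma homog_neg (p : MvPolynomial (Fin 3) K) (e : ℤ) (he : e < 0) (h : homog p e) : p = 0 := by
  have h1 : p ∈ WH K e := h
  rw [WH_neg e he] at h1
  exact h1

lemma homog_const (p : MvPolynomial (Fin 3) K) (e : ℤ) (he : e ≠ 0) (h : homog p e) :
    constantCoeff p = 0 := by
  by_contra h0
  have h1 : coeff 0 p ≠ 0 := h0
  have := h h1
  simp at this
  exact he this.symm

open Finset in
lemma condH (n : ℕ) (a : Fin (n + 2) → ℤ) (b : Fin n → ℤ)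
    (Φ : Matrix (Fin n) (Fin (n + 2)) (MvPolynomial (Fin 3) K))
    (hΦ : ∀ j i, homog (Φ j i) (a i - b j))
    (hfin : FiniteColength n a b Φ) (t : ℤ) :
    #{i | a i ≤ t} ≤ #{j | b j ≤ t} ∨ ∀ e, t < e → #{j | b j = e} ≤ #{i | a i = e} := by
  classical
  rw [or_iff_not_imp_left]
  intro hlt e he
  rw [not_le] at hlt
  have ca : #{i | a i ≤ t} + #{i | t < a i} = n + 2 := by
    have := card_filter_add_card_filter_not (s := (univ : Finset (Fin (n+2)))) (fun i => a i ≤ t)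
    simpa using this
  have cb : #{i | b i ≤ t} + #{i | t < b i} = n := by
    have := card_filter_add_card_filter_not (s := (univ : Finset (Fin n))) (fun i => b i ≤ t)
    simpa using this
  obtain ⟨T, hT1, hT2, hT3⟩ := exists_subsuperset_card_eq
    (s := (univ.filter fun i => t < a i)) (t := univ) (n := #{i | t < b i} + 2)
    (subset_univ _) (by omega) (by rw [card_univ, Fintype.card_fin]; omega)
  have hT : ∀ i, i ∉ T → a i ≤ t := fun i hi => by
    by_contra h
    exact hi (hT1 (by simpa using h))
  obtain ⟨i0, hi0, hi0t⟩ : ∃ i0 ∈ T, a i0 ≤ t := by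
    by_contra! h
    have : T ⊆ univ.filter fun i => t < a i := fun i hi => by simpa using h i hi
    have := card_le_card this
    omega
  have hz : ∀ j i, t < b j → a i ≤ t → Φ j i = 0 := fun j i h1 h2 =>
    homog_neg _ _ (by omega) (hΦ j i)
  let Φ' : Matrix {j // t < b j} {i // i ∈ T} (MvPolynomial (Fin 3) K) :=
    Φ.submatrix Subtype.val Subtype.val
  have hcard : Fintype.card {i // i ∈ T} = Fintype.card ({j // t < b j} ⊕ Fin 2) := by
    rw [Fintype.card_sum, Fintype.card_fin, Fintype.card_coe, hT3, Fintype.card_subtype]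
  let ee := Fintype.equivOfCardEq hcard
  obtain ⟨N, hS⟩ := exists_S n a b Φ hfin
  obtain ⟨f, g, h, H, inj, hf, hg, hh⟩ := br_all ee Φ' N (by
    intro k
    obtain ⟨S, hS⟩ := hS k
    refine ⟨S.submatrix Subtype.val Subtype.val, ?_⟩
    refine Matrix.ext fun i j => ?_
    have h1 := congrFun (congrFun hS i.1) j.1
    rw [Matrix.mul_apply] at h1 ⊢
    simp only [Matrix.smul_apply, Matrix.one_apply, Subtype.ext_iff] at h1 ⊢
    rw [← h1]
    simp only [Φ', Matrix.submatrix_apply]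
    rw [Finset.sum_coe_sort T (fun x => Φ i.1 x * S x j.1)]
    refine sum_subset (subset_univ _) fun x _ hx => ?_
    rw [hz i.1 x i.2 (hT x hx), zero_mul])
  have surj := br_zero_col ee Φ' f g h H inj hf hg hh ⟨i0, hi0⟩ (fun j => hz j.1 i0 j.2 hi0t)
  -- reduction modulo the irrelevant ideal
  let Q : Matrix {j // b j = e} {i // a i = e} K :=
    Matrix.of fun j i => constantCoeff (Φ j.1 i.1)
  have hQ : Function.Surjective Q.mulVecLin := by
    intro y
    obtain ⟨x, hx⟩ := surj (fun j => if hj : b j.1 = e then C (y ⟨j.1, hj⟩) else 0)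
    have hmem : ∀ i, a i = e → i ∈ T := fun i hi => hT1 (by simp [hi, he])
    refine ⟨fun i => constantCoeff (x ⟨i.1, hmem i.1 i.2⟩), ?_⟩
    ext j
    have h1 := congrFun hx ⟨j.1, by rw [j.2]; exact he⟩
    have h2 := congrArg constantCoeff h1
    simp only [j.2, dite_true, constantCoeff_C, Matrix.mulVec, dotProduct, map_sum, map_mul] at h2
    rw [← h2]
    simp only [Matrix.mulVecLin_apply, Matrix.mulVec, dotProduct, Q, Matrix.of_apply, Φ',
      Matrix.submatrix_apply]
    refine Fintype.sum_of_injective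
      (fun i : {i // a i = e} => (⟨i.1, hmem i.1 i.2⟩ : {i // i ∈ T})) ?_ _ _ ?_ ?_
    · intro i i' h; simpa [Subtype.ext_iff] using h
    · intro i hi
      have : a i.1 ≠ e := fun h => hi ⟨⟨i.1, h⟩, rfl⟩
      rw [homog_const _ _ (by rw [j.2]; exact sub_ne_zero.2 this) (hΦ j.1 i.1), zero_mul]
    · intro i; rfl
  have := LinearMap.finrank_le_finrank_of_surjective hQ
  rw [Module.finrank_fintype_fun_eq_card, Module.finrank_fintype_fun_eq_card,
    Fintype.card_subtype, Fintype.card_subtype] at this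
  exact this

end Assembly

/-- The Hilbert function of `M = coker φ` is unimodal: there is an integer `p`
such that `dim M_{d-1} ≤ dim M_d` for all `d ≤ p` and `dim M_d ≥ dim M_{d+1}` for all
`d ≥ p`. -/
theorem statement6 {K : Type*} [Field K] [IsAlgClosed K] [CharZero K]
    (n : ℕ) (a : Fin (n + 2) → ℤ) (b : Fin n → ℤ)
    (Φ : Matrix (Fin n) (Fin (n + 2)) (MvPolynomial (Fin 3) K))
    (hΦ : ∀ j i, homog (Φ j i) (a i - b j))
    (hfin : FiniteColength n a b Φ) :
    ∃ p : ℤ,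
      (∀ d : ℤ, d ≤ p →
        Module.finrank K (Md n a b Φ (d - 1)) ≤ Module.finrank K (Md n a b Φ d)) ∧
      (∀ d : ℤ, p ≤ d →
        Module.finrank K (Md n a b Φ (d + 1)) ≤ Module.finrank K (Md n a b Φ d)) := by
  have H := condH n a b Φ hΦ hfin
  obtain ⟨c, hc⟩ : ∃ c : ℤ, c = ∑ i, a i - ∑ j, b j := ⟨_, rfl⟩
  refine ⟨c / 2 - 1, fun d hd => ?_, fun d hd => ?_⟩
  · have h1 := hilbert_diff n a b Φ hΦ hfin c hc d
    have h2 := numeric n a b c hc H (d + 1) (by omega)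
    omega
  · have h1 := hilbert_diff n a b Φ hΦ hfin c hc (d + 1)
    rw [add_sub_cancel_right, ramp_symm n a b c hc] at h1
    have h2 := numeric n a b c hc H (c - (d + 1 + 1)) (by omega)
    omega
end

section
/- For a general linear form L ∈ R_1 there exists an integer r such that the multiplication map ×L : M_{d−1} → M_d is injective for all d < r and surjective for all d ≥ r. -/
open MvPolynomial

noncomputable section
namespace WLP

/-- Polynomials of degree at most the integer `e` (zero when `e < 0`). -/
def LE (R : Type*) [CommRing R] (e : ℤ) : Submodule R (Polynomial R) where
  carrier := {f | ∀ k : ℕ, e < k → f.coeff k = 0}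
  add_mem' := by
    intro f g hf hg k hk
    simp [hf k hk, hg k hk]
  zero_mem' := by intro k _; simp
  smul_mem' := by
    intro c f hf k hk
    simp [hf k hk]

lemma mem_LE {R : Type*} [CommRing R] {e : ℤ} {f : (Polynomial R)} :
    f ∈ LE R e ↔ ∀ k : ℕ, e < k → f.coeff k = 0 := Iff.rfl

lemma LE_eq (R : Type*) [CommRing R] (e : ℤ) : LE R e = Polynomial.degreeLT R (e + 1).toNat := by
  ext f
  rw [mem_LE, Polynomial.mem_degreeLT, Polynomial.degree_lt_iff_coeff_zero]
  constructor
  · intro h m hm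
    exact h m (by omega)
  · intro h m hm
    exact h m (by omega)

lemma LE_mono {R : Type*} [CommRing R] {e e' : ℤ} (h : e ≤ e') : LE R e ≤ LE R e' :=
  fun _ hf k hk => hf k (by omega)

lemma LE_neg {R : Type*} [CommRing R] {e : ℤ} (h : e < 0) {f : (Polynomial R)} (hf : f ∈ LE R e) : f = 0 := by
  ext k
  simpa using hf k (by omega)

lemma LE_X_mul {R : Type*} [CommRing R] {e : ℤ} {f : (Polynomial R)} :
    Polynomial.X * f ∈ LE R e ↔ f ∈ LE R (e - 1) := by
  constructor
  · intro h k hk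
    have := h (k + 1) (by push_cast; omega)
    simpa [Polynomial.coeff_X_mul] using this
  · intro h k hk
    cases k with
    | zero => simp
    | succ k => rw [Polynomial.coeff_X_mul]; exact h k (by push_cast at hk; omega)

lemma LE_mul {R : Type*} [CommRing R] {e e' : ℤ} {f g : (Polynomial R)} (hf : f ∈ LE R e)
    (hg : g ∈ LE R e') : f * g ∈ LE R (e + e') := by
  intro k hk
  rw [Polynomial.coeff_mul]
  refine Finset.sum_eq_zero fun x hx => ?_
  rw [Finset.HasAntidiagonal.mem_antidiagonal] at hx
  by_cases h1 : e < x.1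
  · rw [hf _ h1, zero_mul]
  · rw [hg x.2 (by omega), mul_zero]

lemma X_pow_mem_LE {R : Type*} [CommRing R] {e : ℤ} {j : ℕ} (h : (j : ℤ) ≤ e) :
    (Polynomial.X ^ j : (Polynomial R)) ∈ LE R e := by
  intro k hk
  rw [Polynomial.coeff_X_pow, if_neg (by omega)]

instance LE_finite (k : Type*) [Field k] (e : ℤ) : FiniteDimensional k (LE k e) := by
  rw [LE_eq]
  exact (Polynomial.degreeLTEquiv k _).symm.finiteDimensional

lemma finrank_LE (k : Type*) [Field k] (e : ℤ) : Module.finrank k (LE k e) = (e + 1).toNat := by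
  rw [LE_eq, (Polynomial.degreeLTEquiv k _).finrank_eq, Module.finrank_fin_fun]

/-- Degree `≤ d` piece of the (dehomogenised) graded free module. -/
def FD (R : Type*) [CommRing R] (N : ℕ) (a : Fin N → ℤ) (d : ℤ) : Submodule R (Fin N → (Polynomial R)) :=
  Submodule.pi Set.univ fun i => LE R (d - a i)

lemma mem_FD {R : Type*} [CommRing R] {N : ℕ} {a : Fin N → ℤ} {d : ℤ} {f : Fin N → (Polynomial R)} :
    f ∈ FD R N a d ↔ ∀ i, f i ∈ LE R (d - a i) := by
  simp [FD, Submodule.mem_pi]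

lemma FD_mono {R : Type*} [CommRing R] {N : ℕ} {a : Fin N → ℤ} {d d' : ℤ} (h : d ≤ d') :
    FD R N a d ≤ FD R N a d' := by
  intro f hf
  rw [mem_FD] at *
  exact fun i => LE_mono (by omega) (hf i)

lemma FD_X_smul {R : Type*} [CommRing R] {N : ℕ} {a : Fin N → ℤ} {d : ℤ} {f : Fin N → (Polynomial R)} :
    (Polynomial.X : (Polynomial R)) • f ∈ FD R N a d ↔ f ∈ FD R N a (d - 1) := by
  rw [mem_FD, mem_FD]
  refine forall_congr' fun i => ?_
  rw [Pi.smul_apply, smul_eq_mul, LE_X_mul]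
  have : d - a i - 1 = d - 1 - a i := by ring
  rw [this]

lemma FD_smul {R : Type*} [CommRing R] {N : ℕ} {a : Fin N → ℤ} {d e : ℤ} {f : Fin N → (Polynomial R)}
    {g : (Polynomial R)} (hg : g ∈ LE R e) (hf : f ∈ FD R N a d) : g • f ∈ FD R N a (e + d) := by
  rw [mem_FD] at *
  intro i
  have := LE_mul hg (hf i)
  rw [← add_sub_assoc] at this
  exact this

/-- `FD` as a product. -/
def FDequiv (k : Type*) [Field k] (N : ℕ) (a : Fin N → ℤ) (d : ℤ) :
    FD k N a d ≃ₗ[k] (∀ i, LE k (d - a i)) where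
  toFun f i := ⟨f.1 i, mem_FD.1 f.2 i⟩
  invFun f := ⟨fun i => (f i).1, mem_FD.2 fun i => (f i).2⟩
  map_add' _ _ := rfl
  map_smul' _ _ := rfl
  left_inv _ := rfl
  right_inv _ := rfl

instance FD_finite (k : Type*) [Field k] (N : ℕ) (a : Fin N → ℤ) (d : ℤ) :
    FiniteDimensional k (FD k N a d) := (FDequiv k N a d).symm.finiteDimensional

lemma finrank_FD (k : Type*) [Field k] (N : ℕ) (a : Fin N → ℤ) (d : ℤ) :
    Module.finrank k (FD k N a d) = ∑ i, (d - a i + 1).toNat := by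
  rw [(FDequiv k N a d).finrank_eq, Module.finrank_pi_fintype]
  simp [finrank_LE]

/-- The matrix as a linear map over the coefficient ring. -/
def psi {R : Type*} [CommRing R] {n : ℕ} (Ψ : Matrix (Fin n) (Fin (n + 2)) (Polynomial R)) :
    (Fin (n + 2) → (Polynomial R)) →ₗ[R] (Fin n → (Polynomial R)) := (Matrix.mulVecLin Ψ).restrictScalars R

lemma psi_smul {R : Type*} [CommRing R] {n : ℕ} (Ψ : Matrix (Fin n) (Fin (n + 2)) (Polynomial R))
    (g : (Polynomial R)) (f : Fin (n + 2) → (Polynomial R)) : psi Ψ (g • f) = g • psi Ψ f := by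
  simp [psi]

lemma psi_apply {R : Type*} [CommRing R] {n : ℕ} (Ψ : Matrix (Fin n) (Fin (n + 2)) (Polynomial R))
    (f : Fin (n + 2) → (Polynomial R)) (j : Fin n) : psi Ψ f j = ∑ i, Ψ j i * f i := by
  simp [psi, Matrix.mulVec, dotProduct]

lemma psi_mem {R : Type*} [CommRing R] {n : ℕ} {a : Fin (n + 2) → ℤ} {b : Fin n → ℤ}
    {Ψ : Matrix (Fin n) (Fin (n + 2)) (Polynomial R)} (hΨ : ∀ j i, Ψ j i ∈ LE R (a i - b j)) {d : ℤ}
    {f : Fin (n + 2) → (Polynomial R)} (hf : f ∈ FD R (n + 2) a d) : psi Ψ f ∈ FD R n b d := by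
  rw [mem_FD] at *
  intro j
  rw [psi_apply]
  refine Submodule.sum_mem _ fun i _ => ?_
  have := LE_mul (hΨ j i) (hf i)
  have e : a i - b j + (d - a i) = d - b j := by ring
  rwa [e] at this

/-- Degree `≤ d` piece of the kernel. -/
def ND {R : Type*} [CommRing R] {n : ℕ} (a : Fin (n + 2) → ℤ)
    (Ψ : Matrix (Fin n) (Fin (n + 2)) (Polynomial R)) (d : ℤ) : Submodule R (Fin (n + 2) → (Polynomial R)) :=
  FD R (n + 2) a d ⊓ LinearMap.ker (psi Ψ)

lemma mem_ND {R : Type*} [CommRing R] {n : ℕ} {a : Fin (n + 2) → ℤ}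
    {Ψ : Matrix (Fin n) (Fin (n + 2)) (Polynomial R)} {d : ℤ} {f : Fin (n + 2) → (Polynomial R)} :
    f ∈ ND a Ψ d ↔ f ∈ FD R (n + 2) a d ∧ psi Ψ f = 0 := by
  simp [ND]

instance ND_finite {k : Type*} [Field k] {n : ℕ} (a : Fin (n + 2) → ℤ)
    (Ψ : Matrix (Fin n) (Fin (n + 2)) (Polynomial k)) (d : ℤ) : FiniteDimensional k (ND a Ψ d) :=
  Submodule.finiteDimensional_of_le (inf_le_left : _ ≤ FD k (n + 2) a d)

/-- Vanishing of the cokernel in degree `d`. -/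
def CZ {R : Type*} [CommRing R] {n : ℕ} (a : Fin (n + 2) → ℤ) (b : Fin n → ℤ)
    (Ψ : Matrix (Fin n) (Fin (n + 2)) (Polynomial R)) (d : ℤ) : Prop :=
  FD R n b d ≤ Submodule.map (psi Ψ) (FD R (n + 2) a d)

lemma finrank_ND {k : Type*} [Field k] {n : ℕ} {a : Fin (n + 2) → ℤ} {b : Fin n → ℤ}
    {Ψ : Matrix (Fin n) (Fin (n + 2)) (Polynomial k)} (hΨ : ∀ j i, Ψ j i ∈ LE k (a i - b j)) {d : ℤ}
    (h : CZ a b Ψ d) :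
    Module.finrank k (ND a Ψ d) + ∑ j, (d - b j + 1).toNat = ∑ i, (d - a i + 1).toNat := by
  have h1 := LinearMap.finrank_range_add_finrank_ker ((psi Ψ).domRestrict (FD k (n + 2) a d))
  rw [LinearMap.range_domRestrict, LinearMap.ker_domRestrict, finrank_FD] at h1
  have h2 : Submodule.map (psi Ψ) (FD k (n + 2) a d) = FD k n b d := by
    refine le_antisymm ?_ h
    rintro _ ⟨f, hf, rfl⟩
    exact psi_mem hΨ hf
  have h3 : Module.finrank k (Submodule.submoduleOf (LinearMap.ker (psi Ψ)) (FD k (n + 2) a d)) =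
      Module.finrank k (ND a Ψ d) := by
    rw [ND, ← Submodule.map_comap_subtype, Submodule.finrank_map_subtype_eq]
    rfl
  rw [h2, finrank_FD] at h1
  have h4 : Module.finrank k (Submodule.submoduleOf (LinearMap.ker (psi Ψ)) (FD k (n + 2) a d)) +
    ∑ j, (d - b j + 1).toNat = ∑ i, (d - a i + 1).toNat := by
    rw [← h1, add_comm]; rfl
  rw [← h3]; exact h4

end WLP
end

noncomputable section
namespace WLP

section UU
variable {k : Type*} [Field k] {n : ℕ} {a : Fin (n + 2) → ℤ} {b : Fin n → ℤ}
    {Ψ : Matrix (Fin n) (Fin (n + 2)) (Polynomial k)}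

lemma ND_mono {d d' : ℤ} (h : d ≤ d') : ND a Ψ d ≤ ND a Ψ d' :=
  inf_le_inf_right _ (FD_mono h)

/-- Multiplication by `Polynomial.X`. -/
def mulX (k : Type*) [Field k] (N : ℕ) : (Fin N → (Polynomial k)) →ₗ[k] (Fin N → (Polynomial k)) :=
  (LinearMap.lsmul (Polynomial k) (Fin N → (Polynomial k)) Polynomial.X).restrictScalars k

lemma mulX_apply {N : ℕ} (f : Fin N → (Polynomial k)) : mulX k N f = (Polynomial.X : (Polynomial k)) • f := rfl

lemma mulX_injective (N : ℕ) : Function.Injective (mulX k N) := by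
  intro f g h
  ext1 i
  have := congrFun h i
  simp only [mulX_apply, Pi.smul_apply, smul_eq_mul] at this
  exact mul_left_cancel₀ Polynomial.X_ne_zero this

lemma ND_X_smul {d : ℤ} {f : Fin (n + 2) → (Polynomial k)} :
    (Polynomial.X : (Polynomial k)) • f ∈ ND a Ψ d ↔ f ∈ ND a Ψ (d - 1) := by
  rw [mem_ND, mem_ND, FD_X_smul, psi_smul]
  have : (Polynomial.X : (Polynomial k)) • psi Ψ f = 0 ↔ psi Ψ f = 0 := by
    constructor
    · intro h
      apply mulX_injective (k := k) n
      rw [mulX_apply, h, map_zero]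
    · intro h; rw [h, smul_zero]
  rw [this]

lemma ND_smul {d e : ℤ} {f : Fin (n + 2) → (Polynomial k)} {g : (Polynomial k)} (hg : g ∈ LE k e)
    (hf : f ∈ ND a Ψ d) : g • f ∈ ND a Ψ (e + d) := by
  rw [mem_ND] at *
  refine ⟨FD_smul hg hf.1, ?_⟩
  rw [psi_smul, hf.2, smul_zero]

/-- Hilbert function of the kernel. -/
def hN (a : Fin (n + 2) → ℤ) (Ψ : Matrix (Fin n) (Fin (n + 2)) (Polynomial k)) (d : ℤ) : ℤ :=
  Module.finrank k (ND a Ψ d)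

lemma sup_le_ND (d : ℤ) : ND a Ψ (d - 1) ⊔ (ND a Ψ (d - 1)).map (mulX k (n + 2)) ≤ ND a Ψ d := by
  refine sup_le (ND_mono (by omega)) ?_
  rintro _ ⟨f, hf, rfl⟩
  exact ND_X_smul.2 hf

lemma inf_eq_ND (d : ℤ) : ND a Ψ (d - 1) ⊓ (ND a Ψ (d - 1)).map (mulX k (n + 2)) =
    (ND a Ψ (d - 2)).map (mulX k (n + 2)) := by
  have e : d - 1 - 1 = d - 2 := by ring
  apply le_antisymm
  · rintro _ ⟨h1, f, hf, rfl⟩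
    refine ⟨f, ?_, rfl⟩
    have := ND_X_smul.1 h1
    rwa [e] at this
  · rintro _ ⟨f, hf, rfl⟩
    refine ⟨ND_X_smul.2 (by rw [e]; exact hf), f, ND_mono (by omega) hf, rfl⟩

lemma finrank_sup (d : ℤ) :
    (Module.finrank k ↥(ND a Ψ (d - 1) ⊔ (ND a Ψ (d - 1)).map (mulX k (n + 2))) : ℤ) =
      2 * hN a Ψ (d - 1) - hN a Ψ (d - 2) := by
  have h := Submodule.finrank_sup_add_finrank_inf_eq (ND a Ψ (d - 1))
    ((ND a Ψ (d - 1)).map (mulX k (n + 2)))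
  rw [inf_eq_ND] at h
  have e1 := (Submodule.equivMapOfInjective (mulX k (n + 2)) (mulX_injective _)
    (ND a Ψ (d - 1))).finrank_eq
  have e2 := (Submodule.equivMapOfInjective (mulX k (n + 2)) (mulX_injective _)
    (ND a Ψ (d - 2))).finrank_eq
  rw [← e1, ← e2] at h
  unfold hN
  omega

lemma hN_convex (d : ℤ) : 2 * hN a Ψ (d - 1) ≤ hN a Ψ d + hN a Ψ (d - 2) := by
  have h1 := finrank_sup (a := a) (Ψ := Ψ) d
  have h2 := Submodule.finrank_mono (sup_le_ND (a := a) (Ψ := Ψ) d)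
  unfold hN at *
  omega

lemma ND_eq_sup {d : ℤ} (h : 2 * hN a Ψ (d - 1) = hN a Ψ d + hN a Ψ (d - 2)) :
    ND a Ψ (d - 1) ⊔ (ND a Ψ (d - 1)).map (mulX k (n + 2)) = ND a Ψ d := by
  apply Submodule.eq_of_le_of_finrank_eq (sup_le_ND d)
  have h1 := finrank_sup (a := a) (Ψ := Ψ) d
  unfold hN at *
  omega

lemma hN_mono {d d' : ℤ} (h : d ≤ d') : hN a Ψ d ≤ hN a Ψ d' := by
  unfold hN
  exact_mod_cast Submodule.finrank_mono (ND_mono h)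

lemma CZ_step {d : ℤ} (h : 2 * hN a Ψ (d + 1) = hN a Ψ (d + 2) + hN a Ψ d)
    (hC : CZ a b Ψ (d + 1)) : CZ a b Ψ d := by
  intro g hg
  obtain ⟨u, hu, hug⟩ := hC (FD_mono (by omega) hg)
  obtain ⟨v, hv, hvg⟩ := hC (x := (Polynomial.X : (Polynomial k)) • g) (FD_X_smul.2 (by
    have : d + 1 - 1 = d := by ring
    rwa [this]))
  have e1 : d + 2 - 1 = d + 1 := by ring
  have e2 : d + 2 - 2 = d := by ring
  have hs := ND_eq_sup (a := a) (Ψ := Ψ) (d := d + 2) (by rw [e1, e2]; exact h)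
  have hmem : (Polynomial.X : (Polynomial k)) • u - v ∈ ND a Ψ (d + 2) := by
    rw [mem_ND]
    constructor
    · refine Submodule.sub_mem _ (FD_X_smul.2 (by rw [e1]; exact hu)) (FD_mono (by omega) hv)
    · rw [map_sub, psi_smul, hug, hvg, sub_self]
  rw [← hs, Submodule.mem_sup] at hmem
  obtain ⟨n2, hn2, _, ⟨n1, hn1, rfl⟩, hsum⟩ := hmem
  rw [e1] at hn1 hn2
  refine ⟨u - n1, ?_, ?_⟩
  · have : (Polynomial.X : (Polynomial k)) • (u - n1) = v + n2 := by
      rw [mulX_apply] at hsum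
      rw [smul_sub, sub_eq_iff_eq_add, sub_eq_iff_eq_add'.1 hsum.symm]
      abel
    have h3 : (Polynomial.X : (Polynomial k)) • (u - n1) ∈ FD k (n + 2) a (d + 1) := by
      rw [this]
      exact Submodule.add_mem _ hv (mem_ND.1 hn2).1
    have h4 := FD_X_smul.1 h3
    have : d + 1 - 1 = d := by ring
    rwa [this] at h4
  · rw [map_sub, (mem_ND.1 hn1).2, sub_zero, hug]

/-- If `f ≠ 0`, multiples of `f`. -/
def smulMap (N : ℕ) (f : Fin N → (Polynomial k)) : (Polynomial k) →ₗ[k] (Fin N → (Polynomial k)) :=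
  (LinearMap.toSpanSingleton (Polynomial k) (Fin N → (Polynomial k)) f).restrictScalars k

lemma smulMap_apply {N : ℕ} (f : Fin N → (Polynomial k)) (g : (Polynomial k)) : smulMap N f g = g • f := rfl

lemma smulMap_injective {N : ℕ} {f : Fin N → (Polynomial k)} (hf : f ≠ 0) :
    Function.Injective (smulMap N f) := by
  intro g g' h
  obtain ⟨i, hi⟩ : ∃ i, f i ≠ 0 := by
    by_contra! hc
    exact hf (funext hc)
  have := congrFun h i
  simp only [smulMap_apply, Pi.smul_apply, smul_eq_mul] at this
  exact mul_right_cancel₀ hi this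

lemma map_smulMap_le {p d : ℤ} {s : Fin (n + 2) → (Polynomial k)} (hs : s ∈ ND a Ψ p) :
    (LE k (d - p)).map (smulMap (n + 2) s) ≤ ND a Ψ d := by
  rintro _ ⟨g, hg, rfl⟩
  have := ND_smul hg hs
  rwa [sub_add_cancel] at this

lemma finrank_map_smulMap {p d : ℤ} {s : Fin (n + 2) → (Polynomial k)} (hs0 : s ≠ 0) :
    Module.finrank k ((LE k (d - p)).map (smulMap (n + 2) s)) = (d - p + 1).toNat := by
  rw [← (Submodule.equivMapOfInjective _ (smulMap_injective hs0) (LE k (d - p))).finrank_eq,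
    finrank_LE]

lemma le_hN {p d : ℤ} {s : Fin (n + 2) → (Polynomial k)} (hs0 : s ≠ 0) (hs : s ∈ ND a Ψ p) :
    d - p + 1 ≤ hN a Ψ d := by
  have h1 := Submodule.finrank_mono (map_smulMap_le (d := d) hs)
  rw [finrank_map_smulMap hs0] at h1
  unfold hN
  omega

lemma ND_eq_of_hN {p d : ℤ} {s : Fin (n + 2) → (Polynomial k)} (hs0 : s ≠ 0) (hs : s ∈ ND a Ψ p)
    (h : hN a Ψ d = d - p + 1) : (LE k (d - p)).map (smulMap (n + 2) s) = ND a Ψ d := by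
  apply Submodule.eq_of_le_of_finrank_eq (map_smulMap_le hs)
  rw [finrank_map_smulMap hs0]
  unfold hN at h
  omega

lemma hN_small (a : Fin (n + 2) → ℤ) (Ψ : Matrix (Fin n) (Fin (n + 2)) (Polynomial k)) :
    ∃ m : ℤ, ∀ d, d < m → hN a Ψ d = 0 := by
  obtain ⟨m, hm⟩ := (Set.finite_range a).bddBelow
  refine ⟨m, fun d hd => ?_⟩
  have : ND a Ψ d = ⊥ := by
    rw [eq_bot_iff]
    intro f hf
    have h := mem_FD.1 (mem_ND.1 hf).1
    rw [Submodule.mem_bot]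
    funext i
    exact LE_neg (by have := hm ⟨i, rfl⟩; omega) (h i)
  simp [hN, this]

lemma hN_large (hΨ : ∀ j i, Ψ j i ∈ LE k (a i - b j)) {D : ℤ} (hD : ∀ d, D ≤ d → CZ a b Ψ d) :
    ∃ m : ℤ, ∀ d, m ≤ d → hN a Ψ d - hN a Ψ (d - 1) = 2 := by
  obtain ⟨m1, hm1⟩ := (Set.finite_range a).bddAbove
  obtain ⟨m2, hm2⟩ := (Set.finite_range b).bddAbove
  have key : ∀ d, max D (max m1 m2) ≤ d →
      hN a Ψ d = ∑ i, (d - a i + 1) - ∑ j, (d - b j + 1) := by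
    intro d hd
    have h := finrank_ND hΨ (hD d (by omega))
    have h' : ((Module.finrank k (ND a Ψ d) + ∑ j, (d - b j + 1).toNat : ℕ) : ℤ) =
      ((∑ i, (d - a i + 1).toNat : ℕ) : ℤ) := by rw [h]
    rw [Nat.cast_add, Nat.cast_sum, Nat.cast_sum] at h'
    have e1 : ∀ i, ((d - a i + 1).toNat : ℤ) = d - a i + 1 := fun i => by
      have := hm1 ⟨i, rfl⟩; omega
    have e2 : ∀ i, ((d - b i + 1).toNat : ℤ) = d - b i + 1 := fun i => by
      have := hm2 ⟨i, rfl⟩; omega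
    simp only [e1, e2] at h'
    unfold hN
    linarith
  refine ⟨max D (max m1 m2) + 1, fun d hd => ?_⟩
  rw [key d (by omega), key (d - 1) (by omega)]
  simp only [Finset.sum_add_distrib, Finset.sum_sub_distrib, Finset.sum_const, Finset.card_univ,
    Fintype.card_fin, nsmul_eq_mul]
  push_cast
  ring

lemma delta_mono {d d' : ℤ} (h : d ≤ d') :
    hN a Ψ d - hN a Ψ (d - 1) ≤ hN a Ψ d' - hN a Ψ (d' - 1) := by
  induction d', h using Int.leInduction with
  | base => rfl
  | succ m hm ih =>
    have h1 := hN_convex (a := a) (Ψ := Ψ) (m + 1)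
    have e1 : m + 1 - 1 = m := by ring
    have e2 : m + 1 - 2 = m - 1 := by ring
    rw [e1, e2] at h1
    rw [e1]
    omega

/-- The main structure theorem in two variables (dehomogenised). -/
theorem univ_main (hΨ : ∀ j i, Ψ j i ∈ LE k (a i - b j)) {D : ℤ}
    (hD : ∀ d, D ≤ d → CZ a b Ψ d) :
    ∃ r : ℤ, (∀ d, r ≤ d → CZ a b Ψ d) ∧
      (hN a Ψ r ≤ 1 ∨ ∃ (p : ℤ) (s : Fin (n + 2) → (Polynomial k)), s ∈ ND a Ψ p ∧ s ≠ 0 ∧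
        s ∉ ND a Ψ (p - 1) ∧ (LE k 1).map (smulMap (n + 2) s) = ND a Ψ (p + 1) ∧
        hN a Ψ r = r - p + 1) := by
  obtain ⟨m0, hm0⟩ := hN_small a Ψ
  obtain ⟨m1, hm1⟩ := hN_large hΨ hD
  obtain ⟨q, hq, hqmin⟩ := Int.exists_least_of_bdd
    (P := fun d => hN a Ψ d - hN a Ψ (d - 1) = 2)
    ⟨m0, fun d hd => by
      by_contra hc
      rw [hm0 d (by omega), hm0 (d - 1) (by omega)] at hd
      omega⟩ ⟨m1, hm1 m1 le_rfl⟩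
  have hdle : ∀ d, hN a Ψ d - hN a Ψ (d - 1) ≤ 2 := fun d => by
    have := delta_mono (a := a) (Ψ := Ψ) (le_max_left d m1)
    rw [hm1 _ (le_max_right d m1)] at this
    exact this
  have hge : ∀ d, q ≤ d → hN a Ψ d - hN a Ψ (d - 1) = 2 := fun d hd => by
    have := delta_mono (a := a) (Ψ := Ψ) hd
    have := hdle d
    omega
  refine ⟨q - 1, ?_, ?_⟩
  · -- surjectivity
    intro d hd
    have main : ∀ t : ℕ, ∀ d, q - 1 ≤ d → D ≤ d + t → CZ a b Ψ d := by
      intro t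
      induction t with
      | zero => intro d _ h; exact hD d (by simpa using h)
      | succ t ih =>
        intro d h1 h2
        apply CZ_step _ (ih (d + 1) (by omega) (by push_cast at h2; omega))
        have g1 := hge (d + 1) (by omega)
        have g2 := hge (d + 2) (by omega)
        have e1 : d + 1 - 1 = d := by ring
        have e2 : d + 2 - 1 = d + 1 := by ring
        rw [e1] at g1
        rw [e2] at g2
        omega
    exact main (D - d).toNat d hd (by omega)
  · have hlt : ∀ d, d < q → hN a Ψ d - hN a Ψ (d - 1) ≤ 1 := fun d hd => by
      have h1 := hdle d
      have h2 : hN a Ψ d - hN a Ψ (d - 1) ≠ 2 := fun h => by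
        have := hqmin d h; omega
      omega
    by_cases h0 : hN a Ψ (q - 1) = 0
    · left; omega
    obtain ⟨p, hp, hpmin⟩ := Int.exists_least_of_bdd
      (P := fun d => hN a Ψ d ≠ 0)
      ⟨m0, fun d hd => by
        by_contra hc
        exact hd (hm0 d (by omega))⟩ ⟨q - 1, h0⟩
    have hpq : p ≤ q - 1 := hpmin _ h0
    have hp1 : hN a Ψ (p - 1) = 0 := by
      by_contra hc
      have := hpmin _ hc
      omega
    have hnn : ∀ d, 0 ≤ hN a Ψ d := fun d => by unfold hN; positivity
    have hval : ∀ d, p ≤ d → d ≤ q - 1 → hN a Ψ d = d - p + 1 := by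
      intro d hd
      induction d, hd using Int.leInduction with
      | base =>
        intro _
        have := hlt p (by omega)
        have := hnn p
        omega
      | succ m hm ih =>
        intro h
        have i1 := ih (by omega)
        have i2 := hlt (m + 1) (by omega)
        have i3 := delta_mono (a := a) (Ψ := Ψ) (show p ≤ m + 1 by omega)
        have i4 := hnn p
        have e1 : m + 1 - 1 = m := by ring
        rw [e1] at i2 i3
        omega
    by_cases hpr : p = q - 1
    · left
      rw [hval (q - 1) (by omega) le_rfl]; omega
    right
    have hne : ND a Ψ p ≠ ⊥ := by
      intro h
      apply hp
      simp [hN, h]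
    obtain ⟨s, hs, hs0⟩ := Submodule.exists_mem_ne_zero_of_ne_bot hne
    refine ⟨p, s, hs, hs0, ?_, ?_, hval _ (by omega) le_rfl⟩
    · intro h
      have h2 := le_hN (d := p - 1) hs0 h
      omega
    · have := ND_eq_of_hN (d := p + 1) hs0 hs (hval (p + 1) (by omega) (by omega))
      have e : p + 1 - p = 1 := by ring
      rwa [e] at this

end UU
end WLP
end

noncomputable section
namespace WLP

section HH
variable {K : Type*} [Field K]

lemma weight_one_eq (m : Fin 3 →₀ ℕ) :
    Finsupp.weight (fun _ : Fin 3 => (1 : ℤ)) m = (m 0 : ℤ) + m 1 + m 2 := by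
  simp [Finsupp.weight_apply, Finsupp.sum_fintype, Fin.sum_univ_three]

lemma homog_iff {p : MvPolynomial (Fin 3) K} {e : ℤ} :
    homog p e ↔ ∀ m, coeff m p ≠ 0 → (m 0 : ℤ) + m 1 + m 2 = e := by
  unfold homog IsWeightedHomogeneous
  simp only [weight_one_eq]

lemma homog_add {p q : MvPolynomial (Fin 3) K} {e : ℤ} (hp : homog p e) (hq : homog q e) :
    homog (p + q) e := IsWeightedHomogeneous.add hp hq

lemma homog_sum {ι : Type*} {s : Finset ι} {f : ι → MvPolynomial (Fin 3) K} {e : ℤ}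
    (h : ∀ i ∈ s, homog (f i) e) : homog (∑ i ∈ s, f i) e := by
  rw [homog, ← mem_weightedHomogeneousSubmodule]
  exact Submodule.sum_mem _ fun i hi => (mem_weightedHomogeneousSubmodule _ _ _ _).2 (h i hi)

lemma homog_zero (e : ℤ) : homog (0 : MvPolynomial (Fin 3) K) e := by
  rw [homog_iff]; simp

lemma homog_sub {p q : MvPolynomial (Fin 3) K} {e : ℤ} (hp : homog p e) (hq : homog q e) :
    homog (p - q) e := by
  rw [homog, ← mem_weightedHomogeneousSubmodule] at *
  exact Submodule.sub_mem _ hp hq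

lemma homog_monomial (m : Fin 3 →₀ ℕ) (c : K) :
    homog (monomial m c) ((m 0 : ℤ) + m 1 + m 2) := by
  rw [homog_iff]
  intro m' h
  rw [coeff_monomial] at h
  split_ifs at h with h1
  · subst h1; rfl
  · exact absurd rfl h

lemma homog_neg {p : MvPolynomial (Fin 3) K} {e : ℤ} (he : e < 0) (hp : homog p e) : p = 0 := by
  ext m
  by_contra h
  have := homog_iff.1 hp m (by simpa using h)
  omega

section ev
variable {R S : Type*} [CommRing R] [Algebra K R] [CommRing S] [Algebra K S]

/-- Restriction to the line `z = α x + β y`, dehomogenised by `y = 1`. -/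
def ev (α β : R) : MvPolynomial (Fin 3) K →ₐ[K] Polynomial R :=
  aeval ![Polynomial.X, 1, Polynomial.C α * Polynomial.X + Polynomial.C β]

lemma ev_map (φ : R →ₐ[K] S) (α β : R) (f : MvPolynomial (Fin 3) K) :
    (ev α β f).map (φ : R →+* S) = ev (φ α) (φ β) f := by
  have : (Polynomial.mapAlgHom φ).comp (ev (K := K) α β) = ev (φ α) (φ β) := by
    apply MvPolynomial.algHom_ext
    intro i
    fin_cases i <;> simp [ev]
  exact DFunLike.congr_fun this f

lemma ev_LE (α β : R) {f : MvPolynomial (Fin 3) K} {e : ℤ} (hf : homog f e) :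
    ev α β f ∈ LE R e := by
  rw [ev, aeval_def, eval₂_eq']
  refine Submodule.sum_mem _ fun m hm => ?_
  have hm' := homog_iff.1 hf m (mem_support_iff.1 hm)
  have h1 : (Polynomial.X ^ (m 0) : Polynomial R) ∈ LE R (m 0) := X_pow_mem_LE le_rfl
  have h2 : ∀ j : ℕ, (Polynomial.C α * Polynomial.X + Polynomial.C β) ^ j ∈ LE R (j : ℤ) := by
    intro j
    induction j with
    | zero => simpa using X_pow_mem_LE (R := R) (e := 0) (j := 0) le_rfl
    | succ j ih =>
      rw [pow_succ]; push_cast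
      refine LE_mul ih ?_
      intro k hk
      have : k ≠ 0 := by omega
      have h1 : k ≠ 1 := by omega
      simp [Polynomial.coeff_X, Polynomial.coeff_C, this, h1.symm]
  have h3 : algebraMap K (Polynomial R) (coeff m f) ∈ LE R 0 := by
    intro k hk
    have : k ≠ 0 := by omega
    rw [Polynomial.algebraMap_apply, Polynomial.coeff_C, if_neg this]
  have h4 := LE_mul h3 (LE_mul h1 (h2 (m 2)))
  rw [Fin.prod_univ_three]
  simp only [Matrix.cons_val_zero, Matrix.cons_val_one, Matrix.cons_val, one_pow, mul_one]
  exact LE_mono (by omega) h4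

end ev

lemma lift_LE (K : Type*) [Field K] {g : Polynomial K} {e : ℤ} (hg : g ∈ LE K e) :
    ∃ σ : MvPolynomial (Fin 3) K, homog σ e ∧
      ∀ {R : Type _} [CommRing R] [Algebra K R] (α β : R),
        ev α β σ = g.map (algebraMap K R) := by
  rcases lt_or_ge e 0 with he | he
  · refine ⟨0, homog_zero e, fun α β => ?_⟩
    rw [LE_neg he hg]; simp
  obtain ⟨N, rfl⟩ := Int.eq_ofNat_of_zero_le he
  have hdeg : g.natDegree < N + 1 := by
    rw [Nat.lt_succ_iff, Polynomial.natDegree_le_iff_coeff_eq_zero]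
    intro k hk
    exact hg k (by exact_mod_cast hk)
  refine ⟨∑ j ∈ Finset.range (N + 1), C (g.coeff j) * X 0 ^ j * X 1 ^ (N - j), ?_, ?_⟩
  · refine homog_sum fun j hj => ?_
    rw [Finset.mem_range] at hj
    have e1 : (C (g.coeff j) * X 0 ^ j * X 1 ^ (N - j) : MvPolynomial (Fin 3) K) =
        monomial (Finsupp.single 0 j + Finsupp.single 1 (N - j)) (g.coeff j) := by
      rw [X_pow_eq_monomial, X_pow_eq_monomial, C_mul_monomial, monomial_mul]
      simp
    rw [e1]
    have := homog_monomial (K := K) (Finsupp.single 0 j + Finsupp.single 1 (N - j)) (g.coeff j)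
    convert! this using 1
    simp
    omega
  · intro R _ _ α β
    conv_rhs => rw [g.as_sum_range' (N + 1) hdeg]
    rw [map_sum, Polynomial.map_sum]
    refine Finset.sum_congr rfl fun j _ => ?_
    rw [Polynomial.map_monomial, ← Polynomial.C_mul_X_pow_eq_monomial]
    simp [ev]

lemma exists_antideriv [CharZero K] {τ : MvPolynomial (Fin 3) K} {e : ℤ} (h : homog τ (e - 1)) :
    ∃ σ : MvPolynomial (Fin 3) K, homog σ e ∧ pderiv 2 σ = τ := by
  refine ⟨∑ m ∈ τ.support, monomial (m + Finsupp.single 2 1) (coeff m τ / (m 2 + 1)), ?_, ?_⟩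
  · refine homog_sum fun m hm => ?_
    have := homog_monomial (K := K) (m + Finsupp.single 2 1) (coeff m τ / (m 2 + 1))
    convert! this using 1
    have := homog_iff.1 h m (mem_support_iff.1 hm)
    simp
    omega
  · conv_rhs => rw [τ.as_sum]
    rw [map_sum]
    refine Finset.sum_congr rfl fun m _ => ?_
    rw [pderiv_monomial]
    have : ((m 2 : K) + 1) ≠ 0 := by exact_mod_cast Nat.succ_ne_zero (m 2)
    simp [this]

/-- Homogeneous scaling. -/
lemma homog_eval_smul {p : MvPolynomial (Fin 3) K} {N : ℕ} (hp : homog p N) (t : K)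
    (v : Fin 3 → K) : eval (fun i => t * v i) p = t ^ N * eval v p := by
  rw [eval_eq', eval_eq', Finset.mul_sum]
  refine Finset.sum_congr rfl fun m hm => ?_
  have := homog_iff.1 hp m (mem_support_iff.1 hm)
  have hN : N = m 0 + m 1 + m 2 := by omega
  rw [Fin.prod_univ_three, Fin.prod_univ_three, hN]
  ring

lemma eval_ev (α β x : K) (f : MvPolynomial (Fin 3) K) :
    (ev α β f).eval x = eval ![x, 1, α * x + β] f := by
  have : (Polynomial.aeval x).comp (ev (K := K) α β) = aeval ![x, 1, α * x + β] := by
    apply MvPolynomial.algHom_ext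
    intro i
    fin_cases i <;> simp [ev]
  have := DFunLike.congr_fun this f
  simpa [Polynomial.aeval_def, aeval_eq_eval] using this

lemma eval_of_ev_eq_zero {α β : K} {f : MvPolynomial (Fin 3) K} {e : ℤ} (hf : homog f e)
    (h : ev α β f = 0) (x y : K) (hy : y ≠ 0) : eval ![x, y, α * x + β * y] f = 0 := by
  rcases lt_or_ge e 0 with he | he
  · rw [homog_neg he hf]; simp
  obtain ⟨N, rfl⟩ := Int.eq_ofNat_of_zero_le he
  have h1 := homog_eval_smul hf y ![x / y, 1, α * (x / y) + β]
  rw [← eval_ev, h] at h1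
  have e1 : (fun i => y * (![x / y, 1, α * (x / y) + β] : Fin 3 → K) i) =
      ![x, y, α * x + β * y] := by
    funext i
    fin_cases i
    · simp; field_simp
    · simp
    · simp; field_simp
  rw [e1] at h1
  simpa using h1

lemma eq_zero_of_eval [Infinite K] {f : MvPolynomial (Fin 3) K}
    (h : ∀ x y z : K, y ≠ 0 → eval ![x, y, z] f = 0) : f = 0 := by
  have : f * X 1 = 0 := by
    apply MvPolynomial.funext
    intro v
    rw [map_mul, eval_X, map_zero]
    by_cases hv : v 1 = 0
    · rw [hv, mul_zero]
    · have e : v = ![v 0, v 1, v 2] := by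
        funext i; fin_cases i <;> rfl
      rw [e, h _ _ _ (by simpa using hv), zero_mul]
  rcases mul_eq_zero.1 this with h | h
  · exact h
  · exact absurd h (X_ne_zero 1)

end HH
end WLP
end

noncomputable section
namespace WLP
section HH
variable {K : Type*} [Field K]

lemma homog_factor {L f g : MvPolynomial (Fin 3) K} {e : ℤ} (hL : homog L 1) (hf : homog f e)
    (h : f = L * g) : ∃ g', homog g' (e - 1) ∧ f = L * g' := by
  let _ := weightedGradedAlgebra K (fun _ : Fin 3 => (1 : ℤ))
  refine ⟨DirectSum.decompose (weightedHomogeneousSubmodule K (fun _ : Fin 3 => (1 : ℤ))) g (e - 1),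
    ?_, ?_⟩
  · rw [homog, ← mem_weightedHomogeneousSubmodule]
    exact SetLike.coe_mem _
  · have h1 := DirectSum.coe_decompose_mul_add_of_left_mem
      (𝒜 := weightedHomogeneousSubmodule K (fun _ : Fin 3 => (1 : ℤ))) (a := L) (b := g)
      (i := 1) (j := e - 1) ((mem_weightedHomogeneousSubmodule _ _ _ _).2 hL)
    rw [← h1, ← h, add_sub_cancel]
    exact (DirectSum.decompose_of_mem_same _ ((mem_weightedHomogeneousSubmodule _ _ _ _).2 hf)).symm

lemma ker_ev [Infinite K] {c : Fin 3 → K} (hc : c 2 ≠ 0) {f : MvPolynomial (Fin 3) K} {e : ℤ}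
    (hf : homog f e) (h : ev (-(c 0 / c 2)) (-(c 1 / c 2)) f = 0) :
    ∃ g, homog g (e - 1) ∧ f = linform c * g := by
  set α := -(c 0 / c 2) with hα
  set β := -(c 1 / c 2) with hβ
  let θ : MvPolynomial (Fin 3) K →ₐ[K] MvPolynomial (Fin 3) K :=
    aeval ![X 0, X 1, C α * X 0 + C β * X 1]
  have h0 : θ f = 0 := by
    apply eq_zero_of_eval
    intro x y z hy
    rw [← eval_of_ev_eq_zero hf h x y hy]
    have : (aeval ![x, y, z]).comp θ = aeval ![x, y, α * x + β * y] := by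
      apply MvPolynomial.algHom_ext
      intro i
      fin_cases i <;> simp [θ]
    have := DFunLike.congr_fun this f
    simpa [aeval_eq_eval] using this
  have h1 : (Ideal.Quotient.mkₐ K (Ideal.span {linform c})).comp θ =
      Ideal.Quotient.mkₐ K (Ideal.span {linform c}) := by
    apply MvPolynomial.algHom_ext
    intro i
    fin_cases i
    · simp [θ]
    · simp [θ]
    · simp only [AlgHom.comp_apply, Ideal.Quotient.mkₐ_eq_mk]
      rw [Ideal.Quotient.eq, Ideal.mem_span_singleton]
      refine ⟨- C (c 2)⁻¹, ?_⟩
      simp only [θ, linform, Fin.sum_univ_three]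
      simp [hα, hβ, div_eq_mul_inv]
      have : (C (c 2) * C (c 2)⁻¹ : MvPolynomial (Fin 3) K) = 1 := by
        rw [← C_mul, mul_inv_cancel₀ hc, C_1]
      linear_combination (X 2 : MvPolynomial (Fin 3) K) * this
  have h2 := DFunLike.congr_fun h1 f
  rw [AlgHom.comp_apply, h0, map_zero] at h2
  have h3 := Ideal.mem_span_singleton.1 (Ideal.Quotient.eq_zero_iff_mem.1 h2.symm)
  obtain ⟨g, hg⟩ := h3
  exact homog_factor (homog_linform c) hf hg

section maps
variable {n : ℕ} {a : Fin (n + 2) → ℤ} {b : Fin n → ℤ}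
    {Φ : Matrix (Fin n) (Fin (n + 2)) (MvPolynomial (Fin 3) K)}
variable {R : Type*} [CommRing R] [Algebra K R]

/-- The restricted matrix. -/
def evM (α β : R) (Φ : Matrix (Fin n) (Fin (n + 2)) (MvPolynomial (Fin 3) K)) :
    Matrix (Fin n) (Fin (n + 2)) (Polynomial R) := Φ.map (ev α β)

/-- Restriction of vectors. -/
def evV {N : ℕ} (α β : R) (v : Fin N → MvPolynomial (Fin 3) K) : Fin N → Polynomial R :=
  fun i => ev α β (v i)

lemma evM_LE (hΦ : ∀ j i, homog (Φ j i) (a i - b j)) (α β : R) (j : Fin n) (i : Fin (n + 2)) :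
    evM α β Φ j i ∈ LE R (a i - b j) := ev_LE α β (hΦ j i)

lemma evV_mem {N : ℕ} {a : Fin N → ℤ} {d : ℤ} (α β : R) {v : Fin N → MvPolynomial (Fin 3) K}
    (hv : v ∈ degPiece (K := K) N a d) : evV α β v ∈ FD R N a d := by
  rw [mem_FD]
  rw [mem_degPiece] at hv
  exact fun i => ev_LE α β (hv i)

lemma psi_evV (α β : R) (v : Fin (n + 2) → MvPolynomial (Fin 3) K) :
    psi (evM α β Φ) (evV α β v) = evV α β (phiK n Φ v) := by
  funext j
  simp [psi_apply, evV, phiK, evM, Matrix.mulVec, dotProduct]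

lemma phiK_mem (hΦ : ∀ j i, homog (Φ j i) (a i - b j)) {d : ℤ}
    {v : Fin (n + 2) → MvPolynomial (Fin 3) K} (hv : v ∈ degPiece (K := K) (n + 2) a d) :
    phiK n Φ v ∈ degPiece (K := K) n b d := by
  rw [mem_degPiece] at *
  intro j
  have : phiK n Φ v j = ∑ i, Φ j i * v i := by simp [phiK, Matrix.mulVec, dotProduct]
  rw [this]
  refine homog_sum fun i _ => ?_
  have h := IsWeightedHomogeneous.mul (hΦ j i) (hv i)
  have e : a i - b j + (d - a i) = d - b j := by ring
  rw [e] at h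
  exact h

lemma evV_surj {N : ℕ} {a : Fin N → ℤ} {d : ℤ} (α β : K) {f : Fin N → Polynomial K}
    (hf : f ∈ FD K N a d) : ∃ v ∈ degPiece (K := K) N a d, evV α β v = f := by
  rw [mem_FD] at hf
  choose σ h1 h2 using fun i => lift_LE K (hf i)
  refine ⟨σ, mem_degPiece.2 h1, funext fun i => ?_⟩
  have := h2 i α β
  simpa [evV] using this

lemma evV_ker [Infinite K] {c : Fin 3 → K} (hc : c 2 ≠ 0) {N : ℕ} {a : Fin N → ℤ} {d : ℤ}
    {v : Fin N → MvPolynomial (Fin 3) K} (hv : v ∈ degPiece (K := K) N a d)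
    (h : evV (-(c 0 / c 2)) (-(c 1 / c 2)) v = 0) :
    ∃ w ∈ degPiece (K := K) N a (d - 1), v = mulL N (linform c) w := by
  rw [mem_degPiece] at hv
  choose g h1 h2 using fun i => ker_ev hc (hv i) (congrFun h i)
  refine ⟨g, mem_degPiece.2 fun i => ?_, funext fun i => h2 i⟩
  have e : d - a i - 1 = d - 1 - a i := by ring
  rw [← e]; exact h1 i

lemma surj_of_CZ [Infinite K] {c : Fin 3 → K} (hc : c 2 ≠ 0)
    (hΦ : ∀ j i, homog (Φ j i) (a i - b j)) {d : ℤ}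
    (h : CZ a b (evM (-(c 0 / c 2)) (-(c 1 / c 2)) Φ) d) :
    Function.Surjective (mulLmap n a b Φ (linform c) (homog_linform c) d) := by
  intro m
  obtain ⟨⟨w, hw⟩, rfl⟩ := Submodule.mkQ_surjective _ m
  obtain ⟨u, hu, huw⟩ := h (evV_mem (-(c 0 / c 2)) (-(c 1 / c 2)) hw)
  obtain ⟨v, hv, rfl⟩ := evV_surj (-(c 0 / c 2)) (-(c 1 / c 2)) hu
  rw [psi_evV] at huw
  obtain ⟨g, hg, hgw⟩ := evV_ker hc (Submodule.sub_mem _ hw (phiK_mem hΦ hv)) (by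
    funext j
    have := congrFun huw j
    simp only [evV] at this ⊢
    rw [Pi.sub_apply, map_sub, this, sub_self]; rfl)
  refine ⟨Submodule.mkQ _ ⟨g, hg⟩, ?_⟩
  simp only [mulLmap, Submodule.mkQ_apply, Submodule.mapQ_apply]
  rw [Submodule.Quotient.eq]
  refine ⟨-v, Submodule.neg_mem _ hv, ?_⟩
  show phiK n Φ (-v) = mulL n (linform c) g - w
  rw [← hgw, map_neg]
  abel

lemma linform_ne {c : Fin 3 → K} (hc : c 2 ≠ 0) : linform c ≠ 0 := by
  intro h
  have := congrArg (coeff (Finsupp.single 2 1)) h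
  rw [linform, Fin.sum_univ_three] at this
  simp [coeff_C_mul, coeff_X, Finsupp.single_left_inj] at this
  exact hc this

lemma mulL_inj {c : Fin 3 → K} (hc : c 2 ≠ 0) {N : ℕ} {v w : Fin N → MvPolynomial (Fin 3) K}
    (h : mulL N (linform c) v = mulL N (linform c) w) : v = w := by
  funext i
  exact mul_left_cancel₀ (linform_ne hc) (congrFun h i)

lemma inj_of_lift [Infinite K] {c : Fin 3 → K} (hc : c 2 ≠ 0) {d : ℤ}
    (h : ∀ f ∈ ND a (evM (-(c 0 / c 2)) (-(c 1 / c 2)) Φ) d,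
      ∃ v ∈ degPiece (K := K) (n + 2) a d, phiK n Φ v = 0 ∧
        evV (-(c 0 / c 2)) (-(c 1 / c 2)) v = f) :
    Function.Injective (mulLmap n a b Φ (linform c) (homog_linform c) d) := by
  rw [← LinearMap.ker_eq_bot, eq_bot_iff]
  intro m hm
  obtain ⟨⟨g, hg⟩, rfl⟩ := Submodule.mkQ_surjective _ m
  rw [LinearMap.mem_ker] at hm
  simp only [mulLmap, Submodule.mkQ_apply, Submodule.mapQ_apply] at hm
  rw [Submodule.Quotient.mk_eq_zero] at hm
  obtain ⟨f, hf, hfg⟩ := hm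
  have hfg' : phiK n Φ f = mulL n (linform c) g := hfg
  have hL0 : ev (-(c 0 / c 2)) (-(c 1 / c 2)) (linform c) = 0 := by
    simp only [linform, Fin.sum_univ_three, map_add, map_mul, ev, aeval_X, algHom_C]
    simp
    rw [Polynomial.C_eq_algebraMap] 
    have e1 : (algebraMap K (Polynomial K)) (c 2) * algebraMap K (Polynomial K) (c 0 / c 2) =
       algebraMap K (Polynomial K) (c 0) := by
      rw [← map_mul, mul_div_cancel₀ _ hc]
    have e2 : (algebraMap K (Polynomial K)) (c 2) * algebraMap K (Polynomial K) (c 1 / c 2) =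
       algebraMap K (Polynomial K) (c 1) := by
      rw [← map_mul, mul_div_cancel₀ _ hc]
    linear_combination (-Polynomial.X) * e1 - e2
  have h1 : evV (-(c 0 / c 2)) (-(c 1 / c 2)) f ∈ ND a (evM (-(c 0 / c 2)) (-(c 1 / c 2)) Φ) d := by
    rw [mem_ND]
    refine ⟨evV_mem _ _ hf, ?_⟩
    rw [psi_evV, hfg']
    funext j
    show ev _ _ (linform c * g j) = 0
    rw [map_mul, hL0, zero_mul]
  obtain ⟨v, hv, hv0, hvf⟩ := h _ h1
  obtain ⟨w, hw, hwf⟩ := evV_ker hc (Submodule.sub_mem _ hf hv) (by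
    funext j
    have := congrFun hvf j
    simp only [evV] at this ⊢
    rw [Pi.sub_apply, map_sub, this, sub_self]; rfl)
  have h2 : g = phiK n Φ w := by
    apply mulL_inj hc
    rw [← hfg']
    have : phiK n Φ (mulL (n + 2) (linform c) w) = mulL n (linform c) (phiK n Φ w) := by
      simp [phiK, mulL_apply]
    rw [← this, ← hwf, map_sub, hv0, sub_zero]
  rw [Submodule.mem_bot, Submodule.mkQ_apply, Submodule.Quotient.mk_eq_zero]
  exact ⟨w, hw, h2.symm⟩

/-- Vanishing of the cokernel may be tested on monomials. -/
lemma CZ_of_monomials {k : Type*} [Field k] {Ψ : Matrix (Fin n) (Fin (n + 2)) (Polynomial k)}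
    {d : ℤ} (h : ∀ (j : Fin n) (l : ℕ), (l : ℤ) ≤ d - b j →
      ∃ f ∈ FD k (n + 2) a d, psi Ψ f = Pi.single j (Polynomial.X ^ l)) : CZ a b Ψ d := by
  intro g hg
  rw [mem_FD] at hg
  have e1 : g = ∑ j, Pi.single j (g j) := by
    funext i; simp [Finset.sum_apply, Finset.sum_pi_single]
  rw [e1]
  refine Submodule.sum_mem _ fun j _ => ?_
  rw [(g j).as_sum_support]
  have e2 : (Pi.single j (∑ l ∈ (g j).support, Polynomial.monomial l ((g j).coeff l)) :
      Fin n → Polynomial k) = ∑ l ∈ (g j).support, (g j).coeff l • Pi.single j (Polynomial.X ^ l) := by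
    funext i
    by_cases hi : i = j
    · subst hi
      simp [Finset.sum_apply, ← Polynomial.smul_X_eq_monomial]
    · simp [Finset.sum_apply, hi]
  rw [e2]
  refine Submodule.sum_mem _ fun l hl => Submodule.smul_mem _ _ ?_
  obtain ⟨f, hf, hfl⟩ := h j l (by
    by_contra hc
    exact Polynomial.mem_support_iff.1 hl (hg j l (by omega)))
  exact ⟨f, hf, hfl⟩

lemma CZ_of_fin {k : Type _} [Field k] [Algebra K k] (α β : k) {d : ℤ}
    (h : degPiece (K := K) n b d ≤ Submodule.map (phiK n Φ) (degPiece (n + 2) a d)) :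
    CZ a b (evM α β Φ) d := by
  apply CZ_of_monomials
  intro j l hl
  obtain ⟨σ, hσ, hev⟩ := lift_LE K (X_pow_mem_LE (R := K) hl)
  obtain ⟨f, hf, hfσ⟩ := h (x := Pi.single j σ) (by
    rw [mem_degPiece]
    intro i
    by_cases hi : i = j
    · subst hi; simpa using hσ
    · simpa [hi] using homog_zero _)
  refine ⟨evV α β f, evV_mem _ _ hf, ?_⟩
  rw [psi_evV, hfσ]
  funext i
  by_cases hi : i = j
  · subst hi; have h5 := hev α β; simpa [evV] using h5
  · simp [evV, hi]

end maps
end HH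
end WLP
end

noncomputable section
namespace WLP
section GG
variable {K : Type*} [Field K]

lemma pderiv_eq_mul_self {i : Fin 2} {t l : MvPolynomial (Fin 2) K} (ht : t ≠ 0)
    (h : pderiv i t = l * t) : l = 0 := by
  by_contra hl
  have h0 : pderiv i t ≠ 0 := by rw [h]; exact mul_ne_zero hl ht
  have h1 : (pderiv i t).totalDegree = l.totalDegree + t.totalDegree := by
    rw [h, totalDegree_mul_of_isDomain hl ht]
  obtain ⟨m, hm, hm2⟩ := Finset.exists_mem_eq_sup (pderiv i t).support
    (by rwa [Finset.nonempty_iff_ne_empty, Ne, support_eq_empty]) (fun m => m.sum fun _ e => e)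
  have h2 : (pderiv i t).totalDegree = m.sum fun _ e => e := hm2
  rw [mem_support_iff, coeff_pderiv] at hm
  have h3 := le_totalDegree (mem_support_iff.2 (left_ne_zero_of_mul hm))
  rw [Finsupp.sum_add_index' (by simp) (by simp), Finsupp.sum_single_index rfl] at h3
  omega

lemma pderiv_comm (i j : Fin 2) (t : MvPolynomial (Fin 2) K) :
    pderiv i (pderiv j t) = pderiv j (pderiv i t) := by
  by_cases hij : i = j
  · rw [hij]
  ext m
  simp only [coeff_pderiv, Finsupp.add_apply, Finsupp.single_apply, if_neg hij, if_neg (Ne.symm hij)]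
  rw [add_right_comm]
  push_cast
  ring

lemma const_of_pderiv [CharZero K] {t : MvPolynomial (Fin 2) K} (h : ∀ i, pderiv i t = 0) :
    ∃ c, t = C c := by
  refine ⟨coeff 0 t, ?_⟩
  ext m
  rw [coeff_C]
  split_ifs with hm
  · rw [hm]
  · by_contra hc
    obtain ⟨i, hi⟩ : ∃ i, m i ≠ 0 := by
      by_contra! hall
      exact hm (Finsupp.ext fun i => by simp [hall i])
    have h1 := congrArg (coeff (m - Finsupp.single i 1)) (h i)
    rw [coeff_pderiv, tsub_add_cancel_of_le (by
      rw [Finsupp.single_le_iff]; omega)] at h1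
    rw [coeff_zero, mul_eq_zero] at h1
    rcases h1 with h1 | h1
    · exact hc h1
    · exact absurd h1 (Nat.cast_add_one_ne_zero _)

/-- Coefficientwise partial derivative. -/
def dc (i : Fin 2) : Derivation K (Polynomial (MvPolynomial (Fin 2) K))
    (Polynomial (MvPolynomial (Fin 2) K)) :=
  PolynomialModule.equivPolynomialSelf.compDer ((pderiv i).mapCoeffs)

lemma coeff_dc (i : Fin 2) (f : Polynomial (MvPolynomial (Fin 2) K)) (k : ℕ) :
    (dc i f).coeff k = pderiv i (f.coeff k) := rfl

lemma dc_X (i : Fin 2) : dc i (Polynomial.X : Polynomial (MvPolynomial (Fin 2) K)) = 0 := by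
  ext1 k
  rw [coeff_dc, Polynomial.coeff_X]
  split_ifs <;> simp

lemma dc_C (i : Fin 2) (t : MvPolynomial (Fin 2) K) :
    dc i (Polynomial.C t) = Polynomial.C (pderiv i t) := by
  ext1 k
  rw [coeff_dc, Polynomial.coeff_C, Polynomial.coeff_C]
  split_ifs <;> simp

/-- The generic restriction. -/
def evG : MvPolynomial (Fin 3) K →ₐ[K] Polynomial (MvPolynomial (Fin 2) K) :=
  ev (X 0) (X 1)

lemma evG_X0 : evG (X 0 : MvPolynomial (Fin 3) K) = Polynomial.X := by simp [evG, ev]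
lemma evG_X1 : evG (X 1 : MvPolynomial (Fin 3) K) = 1 := by simp [evG, ev]
lemma evG_X2 : evG (X 2 : MvPolynomial (Fin 3) K) =
    Polynomial.C (X 0) * Polynomial.X + Polynomial.C (X 1) := by simp [evG, ev]

/-- The multiplier in the chain rule. -/
def mu (K : Type*) [Field K] : Fin 2 → Polynomial (MvPolynomial (Fin 2) K) := ![Polynomial.X, 1]

lemma dc_evG (i : Fin 2) (σ : MvPolynomial (Fin 3) K) :
    dc i (evG σ) = mu K i * evG (pderiv 2 σ) := by
  induction σ using MvPolynomial.induction_on with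
  | C c =>
    have : evG (C c : MvPolynomial (Fin 3) K) = Polynomial.C (C c) := by
      simp only [evG, ev, algHom_C]; rfl
    rw [this, dc_C, pderiv_C, pderiv_C]; simp
  | add p q hp hq => simp only [map_add, hp, hq, mul_add]
  | mul_X p j hp =>
    rw [map_mul, Derivation.leibniz, hp, pderiv_mul, map_add, map_mul, map_mul]
    have key : dc i (evG (X j : MvPolynomial (Fin 3) K)) = mu K i * evG (pderiv 2 (X j)) := by
      fin_cases j
      · simp only [Fin.zero_eta, evG_X0, dc_X]
        rw [pderiv_X_of_ne (by decide)]; simp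
      · simp only [Fin.mk_one, evG_X1]
        rw [pderiv_X_of_ne (by decide)]; simp
      · simp only [Fin.reduceFinMk, evG_X2, map_add, Derivation.leibniz, dc_X, dc_C]
        fin_cases i
        · simp [mu]
        · simp [mu]
    rw [key]
    simp only [smul_eq_mul]
    ring

lemma lift_generic [CharZero K] (N : ℕ) : ∀ (e : ℤ), e < N →
    ∀ f : Polynomial (MvPolynomial (Fin 2) K),
    f ∈ LE _ e → dc 0 f = Polynomial.X * dc 1 f →
    ∃ σ : MvPolynomial (Fin 3) K, homog σ e ∧ evG σ = f := by
  induction N with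
  | zero =>
    intro e he f hf _
    exact ⟨0, homog_zero e, by rw [LE_neg (by simpa using he) hf, map_zero]⟩
  | succ N ih =>
    intro e he f hf hD
    have hd0 : dc 0 f ∈ LE _ e := fun k hk => by rw [coeff_dc, hf k hk, map_zero]
    have h1 : dc 1 f ∈ LE _ (e - 1) := by rw [hD] at hd0; exact LE_X_mul.1 hd0
    have hcomm : dc 0 (dc 1 f) = dc 1 (dc 0 f) := by
      ext1 k; simp only [coeff_dc]; exact pderiv_comm _ _ _
    have h2 : dc 0 (dc 1 f) = Polynomial.X * dc 1 (dc 1 f) := by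
      rw [hcomm, hD, Derivation.leibniz, dc_X]; simp
    obtain ⟨σ1, hσ1, hev1⟩ := ih (e - 1) (by push_cast at he; omega) _ h1 h2
    obtain ⟨σ, hσ, hσd⟩ := exists_antideriv hσ1
    have g1 : dc 1 (f - evG σ) = 0 := by
      rw [map_sub, dc_evG, hσd, hev1]; simp [mu]
    have g0 : dc 0 (f - evG σ) = 0 := by
      rw [map_sub, dc_evG, hσd, hev1, hD]; simp [mu]
    have gLE : f - evG σ ∈ LE _ e := Submodule.sub_mem _ hf (ev_LE _ _ hσ)
    have hc : ∀ k, ∃ c, (f - evG σ).coeff k = C c := fun k => by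
      apply const_of_pderiv
      intro i
      rw [← coeff_dc]
      fin_cases i
      · exact (congrArg (fun q => Polynomial.coeff q k) g0)
      · exact (congrArg (fun q => Polynomial.coeff q k) g1)
    have hlift : f - evG σ ∈ Polynomial.lifts (algebraMap K (MvPolynomial (Fin 2) K)) := by
      rw [Polynomial.lifts_iff_coeff_lifts]
      intro k
      obtain ⟨c, hc⟩ := hc k
      exact ⟨c, hc.symm⟩
    obtain ⟨g, hg⟩ := hlift
    have hg' : g.map (algebraMap K (MvPolynomial (Fin 2) K)) = f - evG σ := hg
    have hgLE : g ∈ LE K e := fun k hk => by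
      have := gLE k hk
      rw [← hg', Polynomial.coeff_map] at this
      exact (map_eq_zero_iff _ (algebraMap K (MvPolynomial (Fin 2) K)).injective).1 this
    obtain ⟨τ, hτ, hτev⟩ := lift_LE K hgLE
    refine ⟨τ + σ, homog_add hτ hσ, ?_⟩
    have := hτev (X 0 : MvPolynomial (Fin 2) K) (X 1)
    rw [map_add, evG, this, hg', evG, sub_add_cancel]

lemma evG_injOn [CharZero K] {τ : MvPolynomial (Fin 3) K} {e : ℤ} (hτ : homog τ e)
    (h : evG τ = 0) : τ = 0 := by
  apply eq_zero_of_eval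
  intro x y z hy
  have h1 := ev_map (aeval ![0, z / y] : MvPolynomial (Fin 2) K →ₐ[K] K) (X 0) (X 1) τ
  rw [show ev (X 0 : MvPolynomial (Fin 2) K) (X 1) τ = 0 from h, Polynomial.map_zero] at h1
  have h2 := eval_of_ev_eq_zero hτ h1.symm x y hy
  have e : (aeval ![0, z / y] : MvPolynomial (Fin 2) K →ₐ[K] K) (X 0) * x +
    (aeval ![0, z / y] : MvPolynomial (Fin 2) K →ₐ[K] K) (X 1) * y = z := by
    simp; field_simp
  rwa [e] at h2

/-- If `D f = ℓ f` with `ℓ` linear then `ℓ = 0`. -/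
lemma D_eigen {f : Polynomial (MvPolynomial (Fin 2) K)} {l0 l1 : MvPolynomial (Fin 2) K}
    (hf : f ≠ 0) (h : dc 0 f - Polynomial.X * dc 1 f =
      (Polynomial.C l0 + Polynomial.C l1 * Polynomial.X) * f) : l0 = 0 ∧ l1 = 0 := by
  have hk : ∀ k, pderiv 0 (f.coeff (k + 1)) - pderiv 1 (f.coeff k) =
      l0 * f.coeff (k + 1) + l1 * f.coeff k := fun k => by
    have := congrArg (fun q => Polynomial.coeff q (k + 1)) h
    simpa [Polynomial.coeff_X_mul, coeff_dc, add_mul, mul_assoc] using this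
  have hk0 : pderiv 0 (f.coeff 0) = l0 * f.coeff 0 := by
    have := congrArg (fun q => Polynomial.coeff q 0) h
    simpa [coeff_dc, add_mul, mul_assoc] using this
  constructor
  · have hex : ∃ k, f.coeff k ≠ 0 := by
      by_contra! hc
      exact hf (Polynomial.ext fun k => by simp [hc k])
    classical
    have h1 := Nat.find_spec hex
    rcases hn : Nat.find hex with _ | k
    · rw [hn] at h1
      exact pderiv_eq_mul_self h1 hk0
    · rw [hn] at h1
      have h2 : f.coeff k = 0 := by
        by_contra hc
        have := Nat.find_min' hex hc
        omega
      have h3 := hk k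
      rw [h2] at h3
      exact pderiv_eq_mul_self h1 (by simpa using h3)
  · have h1 := hk f.natDegree
    rw [Polynomial.coeff_eq_zero_of_natDegree_lt (Nat.lt_succ_self _)] at h1
    have h2 : f.coeff f.natDegree ≠ 0 := by
      simpa using hf
    have h3 : pderiv 1 (f.coeff f.natDegree) = (-l1) * f.coeff f.natDegree := by
      simp only [map_zero, zero_sub, mul_zero, zero_add] at h1
      rw [neg_mul, ← h1, neg_neg]
    exact neg_eq_zero.1 (pderiv_eq_mul_self h2 h3)

end GG
end WLP
end

noncomputable section
namespace WLP
section clear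
variable {A : Type*} [CommRing A] [IsDomain A]

lemma clear_denoms (k : Type*) [Field k] [Algebra A k] [IsFractionRing A k] {N : ℕ}
    (s : Fin N → Polynomial k) :
    ∃ c : A, c ≠ 0 ∧ ∃ t : Fin N → Polynomial A, ∀ i, (t i).map (algebraMap A k) =
      Polynomial.C (algebraMap A k c) * s i := by
  classical
  obtain ⟨c, hc⟩ := IsLocalization.exist_integer_multiples_of_finset (nonZeroDivisors A)
    (Finset.univ.biUnion fun i => (s i).coeffs)
  refine ⟨c, nonZeroDivisors.ne_zero c.2, ?_⟩
  have h1 : ∀ i, Polynomial.C (algebraMap A k c) * s i ∈ Polynomial.lifts (algebraMap A k) := by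
    intro i
    rw [Polynomial.lifts_iff_coeff_lifts]
    intro m
    rw [Polynomial.coeff_C_mul]
    by_cases hm : (s i).coeff m = 0
    · exact ⟨0, by rw [hm]; simp⟩
    · obtain ⟨y, hy⟩ := hc ((s i).coeff m) (Finset.mem_biUnion.2 ⟨i, Finset.mem_univ _,
        Polynomial.coeff_mem_coeffs hm⟩)
      exact ⟨y, by rw [hy, Algebra.smul_def]⟩
  choose t ht using h1
  exact ⟨t, ht⟩

lemma exists_primitive [UniqueFactorizationMonoid A] {N : ℕ} {i0 : Fin N} {m : ℕ} (x : A) :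
    x ≠ 0 → ∀ s : Fin N → Polynomial A, (s i0).coeff m = x →
    ∃ c : A, c ≠ 0 ∧ ∃ t : Fin N → Polynomial A, (∀ i, s i = Polynomial.C c * t i) ∧
      ∀ π : A, Prime π → ¬ ∀ i, Polynomial.C π ∣ t i := by
  induction x using (IsWellFounded.wf (r := DvdNotUnit (α := A))).induction with
  | _ x ih =>
    intro hx s hs
    by_cases h : ∀ π : A, Prime π → ¬ ∀ i, Polynomial.C π ∣ s i
    · exact ⟨1, one_ne_zero, s, by simp, h⟩
    push Not at h
    obtain ⟨π, hπ, hdiv⟩ := h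
    choose u hu using hdiv
    have hxu : x = π * (u i0).coeff m := by rw [← hs, hu, Polynomial.coeff_C_mul]
    have hu0 : (u i0).coeff m ≠ 0 := by
      intro h0; rw [h0, mul_zero] at hxu; exact hx hxu
    obtain ⟨c, hc, t, ht, hp⟩ := ih ((u i0).coeff m)
      ⟨hu0, π, hπ.not_isUnit, by rw [hxu, mul_comm]⟩ hu0 u rfl
    refine ⟨π * c, mul_ne_zero hπ.ne_zero hc, t, fun i => ?_, hp⟩
    rw [hu, ht, Polynomial.C_mul, mul_assoc]

lemma cancel_primitive [UniqueFactorizationMonoid A] {N : ℕ} {t u : Fin N → Polynomial A}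
    (hp : ∀ π : A, Prime π → ¬ ∀ i, Polynomial.C π ∣ t i) (c : A) : c ≠ 0 →
    ∀ l : Polynomial A, (∀ i, Polynomial.C c * u i = l * t i) →
    ∃ l', l = Polynomial.C c * l' ∧ ∀ i, u i = l' * t i := by
  induction c using UniqueFactorizationMonoid.induction_on_prime with
  | h₁ => intro h; exact absurd rfl h
  | h₂ c hc =>
    intro _ l hl
    obtain ⟨c', hc'⟩ := hc.exists_right_inv
    have e : Polynomial.C c * Polynomial.C c' = 1 := by rw [← Polynomial.C_mul, hc', Polynomial.C_1]
    refine ⟨Polynomial.C c' * l, ?_, fun i => ?_⟩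
    · rw [← mul_assoc, e, one_mul]
    · linear_combination Polynomial.C c' * hl i - u i * e
  | h₃ c π hc0 hπ ih =>
    intro _ l hl
    have hπ' : Prime (Polynomial.C π) := Polynomial.prime_C_iff.2 hπ
    have hdvd : Polynomial.C π ∣ l := by
      by_contra hnd
      refine hp π hπ fun i => ?_
      have : Polynomial.C π ∣ l * t i := ⟨Polynomial.C c * u i, by
        rw [← hl, Polynomial.C_mul, mul_assoc]⟩
      exact (hπ'.dvd_or_dvd this).resolve_left hnd
    obtain ⟨l1, rfl⟩ := hdvd
    obtain ⟨l', h1, h2⟩ := ih hc0 l1 fun i => by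
      apply mul_left_cancel₀ hπ'.ne_zero
      have := hl i
      rw [Polynomial.C_mul, mul_assoc, mul_assoc] at this
      exact this
    exact ⟨l', by rw [h1, Polynomial.C_mul, mul_assoc], h2⟩
end clear

section GG
variable {K : Type*} [Field K] {n : ℕ} {a : Fin (n + 2) → ℤ} {b : Fin n → ℤ}
    {Φ : Matrix (Fin n) (Fin (n + 2)) (MvPolynomial (Fin 3) K)}

lemma psi_map {R S : Type*} [CommRing R] [Algebra K R] [CommRing S] [Algebra K S]
    (φ : R →ₐ[K] S) (α β : R) (f : Fin (n + 2) → Polynomial R) (j : Fin n) :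
    psi (evM (φ α) (φ β) Φ) (fun i => (f i).map (φ : R →+* S)) j =
      (psi (evM α β Φ) f j).map (φ : R →+* S) := by
  simp only [psi_apply, evM, Matrix.map_apply, Polynomial.map_sum, Polynomial.map_mul, ev_map]

/-- The derivation killing restrictions. -/
def DD (f : Polynomial (MvPolynomial (Fin 2) K)) : Polynomial (MvPolynomial (Fin 2) K) :=
  dc 0 f - Polynomial.X * dc 1 f

lemma psi_DD {t : Fin (n + 2) → Polynomial (MvPolynomial (Fin 2) K)}
    (h : psi (evM (X 0) (X 1) Φ) t = 0) : psi (evM (X 0) (X 1) Φ) (fun i => DD (t i)) = 0 := by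
  funext j
  have hj := congrFun h j
  rw [psi_apply] at hj ⊢
  have h0 := congrArg (dc 0) hj
  have h1 := congrArg (dc 1) hj
  simp only [map_sum, Derivation.leibniz, Pi.zero_apply, map_zero, smul_eq_mul] at h0 h1
  have e : ∀ i, evM (X 0) (X 1) Φ j i * DD (t i) =
      (evM (X 0) (X 1) Φ j i * dc 0 (t i) + t i * dc 0 (evM (X 0) (X 1) Φ j i)) -
      Polynomial.X * (evM (X 0) (X 1) Φ j i * dc 1 (t i) +
        t i * dc 1 (evM (X 0) (X 1) Φ j i)) := by
    intro i
    have e0 := dc_evG 0 (Φ j i)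
    have e1 := dc_evG 1 (Φ j i)
    have : evM (X 0 : MvPolynomial (Fin 2) K) (X 1) Φ j i = evG (Φ j i) := rfl
    rw [this, e0, e1, DD]
    simp [mu]
    ring
  rw [Finset.sum_congr rfl fun i _ => e i, Finset.sum_sub_distrib, ← Finset.mul_sum, h0, h1]
  simp

lemma DD_LE {f : Polynomial (MvPolynomial (Fin 2) K)} {e : ℤ} (hf : f ∈ LE _ e) :
    DD f ∈ LE _ (e + 1) := by
  have h : ∀ i, dc i f ∈ LE _ e := fun i k hk => by rw [coeff_dc, hf k hk, map_zero]
  refine Submodule.sub_mem _ (LE_mono (by omega) (h 0)) (LE_X_mul.2 ?_)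
  rw [add_sub_cancel_right]; exact h 1

lemma LE_of_map {R S : Type*} [CommRing R] [CommRing S] {φ : R →+* S}
    (hφ : Function.Injective φ) {f : Polynomial R} {e : ℤ} (h : f.map φ ∈ LE S e) :
    f ∈ LE R e := fun k hk => by
  have := h k hk
  rw [Polynomial.coeff_map] at this
  exact (map_eq_zero_iff φ hφ).1 this

lemma LE_map {R S : Type*} [CommRing R] [CommRing S] {φ : R →+* S}
    {f : Polynomial R} {e : ℤ} (h : f ∈ LE R e) : f.map φ ∈ LE S e := fun k hk => by
  rw [Polynomial.coeff_map, h k hk, map_zero]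

/-- The fraction field of the parameter ring. -/
abbrev KK (K : Type*) [Field K] := FractionRing (MvPolynomial (Fin 2) K)

/-- Inclusion into the fraction field. -/
def inc (K : Type*) [Field K] : MvPolynomial (Fin 2) K →ₐ[K] KK K :=
  IsScalarTower.toAlgHom K (MvPolynomial (Fin 2) K) (KK K)

lemma inc_inj : Function.Injective (inc K) := IsFractionRing.injective (MvPolynomial (Fin 2) K) (KK K)

/-- The generic matrix. -/
def genM (Φ : Matrix (Fin n) (Fin (n + 2)) (MvPolynomial (Fin 3) K)) :
    Matrix (Fin n) (Fin (n + 2)) (Polynomial (KK K)) :=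
  evM (inc K (X 0)) (inc K (X 1)) Φ

/-- Scalar extension of vectors. -/
def mapV {N : ℕ} (t : Fin N → Polynomial (MvPolynomial (Fin 2) K)) : Fin N → Polynomial (KK K) :=
  fun i => (t i).map (inc K : MvPolynomial (Fin 2) K →+* KK K)

lemma psi_genM (t : Fin (n + 2) → Polynomial (MvPolynomial (Fin 2) K)) :
    psi (genM Φ) (mapV t) = mapV (psi (evM (X 0) (X 1) Φ) t) :=
  funext fun j => psi_map (inc K) (X 0) (X 1) t j

lemma mapV_inj {N : ℕ} {t t' : Fin N → Polynomial (MvPolynomial (Fin 2) K)}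
    (h : mapV t = mapV t') : t = t' :=
  funext fun i => Polynomial.map_injective _ inc_inj (congrFun h i)

theorem generic_section [CharZero K] {p : ℤ} {s : Fin (n + 2) → Polynomial (KK K)}
    (hΦ : ∀ j i, homog (Φ j i) (a i - b j))
    (hs : s ∈ ND a (genM Φ) p) (hs0 : s ≠ 0) (hs1 : s ∉ ND a (genM Φ) (p - 1))
    (hmap : (LE (KK K) 1).map (smulMap (n + 2) s) = ND a (genM Φ) (p + 1)) :
    ∃ σ ∈ degPiece (K := K) (n + 2) a p, phiK n Φ σ = 0 ∧
      ∃ (i : Fin (n + 2)) (m : ℕ), (m : ℤ) = p - a i ∧ (evG (σ i)).coeff m ≠ 0 := by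
  obtain ⟨c0, hc0, s0, hs0'⟩ := clear_denoms (A := MvPolynomial (Fin 2) K) (KK K) s
  obtain ⟨i0, hi0⟩ : ∃ i, s i ≠ 0 := by
    by_contra! hc
    exact hs0 (funext hc)
  have hι0 : algebraMap (MvPolynomial (Fin 2) K) (KK K) c0 ≠ 0 :=
    (map_ne_zero_iff _ (IsFractionRing.injective _ _)).2 hc0
  have hs00 : s0 i0 ≠ 0 := by
    intro h
    have := hs0' i0
    rw [h, Polynomial.map_zero] at this
    exact mul_ne_zero (Polynomial.C_ne_zero.2 hι0) hi0 this.symm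
  obtain ⟨c1, hc1, t, ht, hprim⟩ := exists_primitive (i0 := i0) (m := (s0 i0).natDegree) _
    (by simpa using hs00) s0 rfl
  have hι1 : algebraMap (MvPolynomial (Fin 2) K) (KK K) c1 ≠ 0 :=
    (map_ne_zero_iff _ (IsFractionRing.injective _ _)).2 hc1
  set x0 := algebraMap (MvPolynomial (Fin 2) K) (KK K) c0
  set x1 := algebraMap (MvPolynomial (Fin 2) K) (KK K) c1
  have hrel : x1 • mapV t = x0 • s := by
    funext i
    have h1 := hs0' i
    rw [ht, Polynomial.map_mul, Polynomial.map_C] at h1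
    simp only [Pi.smul_apply, Polynomial.smul_eq_C_mul]
    exact h1
  have hT : mapV t = (x1⁻¹ * x0) • s := by
    rw [mul_smul, ← hrel, smul_smul, inv_mul_cancel₀ hι1, one_smul]
  have hS : s = (x0⁻¹ * x1) • mapV t := by
    rw [mul_smul, hrel, smul_smul, inv_mul_cancel₀ hι0, one_smul]
  have hTN : mapV t ∈ ND a (genM Φ) p := by rw [hT]; exact Submodule.smul_mem _ _ hs
  have hTN1 : mapV t ∉ ND a (genM Φ) (p - 1) := fun h => hs1 (by
    rw [hS]; exact Submodule.smul_mem _ _ h)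
  have ht0 : t i0 ≠ 0 := by
    intro h; rw [ht, h, mul_zero] at hs00; exact hs00 rfl
  rw [mem_ND, mem_FD] at hTN
  have htLE : ∀ i, t i ∈ LE _ (p - a i) := fun i => LE_of_map inc_inj (hTN.1 i)
  have hpsi : psi (evM (X 0) (X 1) Φ) t = 0 := by
    apply mapV_inj
    rw [← psi_genM, hTN.2]
    funext i; simp [mapV]
  have hu : mapV (fun i => DD (t i)) ∈ ND a (genM Φ) (p + 1) := by
    rw [mem_ND, mem_FD]
    refine ⟨fun i => ?_, ?_⟩
    · have e : p + 1 - a i = p - a i + 1 := by ring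
      rw [e]
      exact LE_map (DD_LE (htLE i))
    · rw [psi_genM, psi_DD hpsi]
      funext i; simp [mapV]
  rw [← hmap] at hu
  obtain ⟨l, hl, hlu⟩ := hu
  rw [smulMap_apply] at hlu
  obtain ⟨c, hc, lh, hlh⟩ := clear_denoms (A := MvPolynomial (Fin 2) K) (KK K) (N := 1)
    (fun _ => (x0⁻¹ * x1) • l)
  have hlh' := hlh 0
  have hcu : ∀ i, Polynomial.C c * DD (t i) = lh 0 * t i := by
    intro i
    apply Polynomial.map_injective _ (IsFractionRing.injective (MvPolynomial (Fin 2) K) (KK K))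
    rw [Polynomial.map_mul, Polynomial.map_mul, hlh', Polynomial.map_C]
    have h1 : l * s i = (DD (t i)).map (algebraMap _ (KK K)) := congrFun hlu i
    have h2 : s i = (x0⁻¹ * x1) • (t i).map (algebraMap _ (KK K)) := congrFun hS i
    rw [← h1, h2]
    simp only [Polynomial.smul_eq_C_mul]
    ring
  obtain ⟨l', hl', hul⟩ := cancel_primitive (u := fun i => DD (t i)) hprim c hc (lh 0) hcu
  have hlLE : l' ∈ LE _ 1 := by
    intro k hk
    have h1 := congrArg (fun q => Polynomial.coeff q k) hlh'
    simp only [Polynomial.coeff_map, Polynomial.coeff_C_mul, Polynomial.coeff_smul] at h1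
    rw [hl k hk, smul_zero, mul_zero] at h1
    have h2 := (map_eq_zero_iff _ (IsFractionRing.injective (MvPolynomial (Fin 2) K) (KK K))).1 h1
    rw [hl', Polynomial.coeff_C_mul] at h2
    exact (mul_eq_zero.1 h2).resolve_left hc
  have hlform : l' = Polynomial.C (l'.coeff 0) + Polynomial.C (l'.coeff 1) * Polynomial.X := by
    rw [add_comm]
    apply Polynomial.eq_X_add_C_of_natDegree_le_one
    rw [Polynomial.natDegree_le_iff_coeff_eq_zero]
    intro k hk
    exact hlLE k (by exact_mod_cast hk)
  have hD0 := hul i0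
  rw [hlform] at hD0
  obtain ⟨z0, z1⟩ := D_eigen ht0 hD0
  have hl0 : l' = 0 := by rw [hlform, z0, z1]; simp
  have hlift : ∀ i, ∃ σ : MvPolynomial (Fin 3) K, homog σ (p - a i) ∧ evG σ = t i := by
    intro i
    refine lift_generic ((p - a i + 1).toNat) (p - a i) (by omega) (t i) (htLE i) ?_
    have := hul i
    rw [hl0, zero_mul] at this
    exact sub_eq_zero.1 this
  choose σ hσ1 hσ2 using hlift
  refine ⟨σ, mem_degPiece.2 hσ1, ?_, ?_⟩
  · have h1 := phiK_mem hΦ (mem_degPiece.2 hσ1)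
    have h2 := psi_evV (Φ := Φ) (X 0 : MvPolynomial (Fin 2) K) (X 1) σ
    have h3 : evV (X 0 : MvPolynomial (Fin 2) K) (X 1) σ = t := funext hσ2
    rw [h3, hpsi] at h2
    rw [mem_degPiece] at h1
    funext j
    exact evG_injOn (h1 j) (congrFun h2 j).symm
  · rw [mem_ND, not_and_or] at hTN1
    have h1 := hTN1.resolve_right (fun h => h hTN.2)
    rw [mem_FD] at h1
    push Not at h1
    obtain ⟨i, hi⟩ := h1
    rw [mem_LE] at hi
    push Not at hi
    obtain ⟨m, hm, hne⟩ := hi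
    have h2 : ¬ (p - a i < m) := fun h => hne (hTN.1 i m h)
    refine ⟨i, m, by omega, ?_⟩
    rw [hσ2]
    intro h
    apply hne
    simp [mapV, h]
end GG
end WLP
end

noncomputable section
namespace WLP
section SS
variable {K : Type*} [Field K] {n : ℕ} {a : Fin (n + 2) → ℤ} {b : Fin n → ℤ}
    {Φ : Matrix (Fin n) (Fin (n + 2)) (MvPolynomial (Fin 3) K)}

lemma spec_one {d : ℤ} (h : CZ a b (genM Φ) d) (j : Fin n) (l : ℕ) (hl : (l : ℤ) ≤ d - b j) :
    ∃ q : MvPolynomial (Fin 2) K, q ≠ 0 ∧ ∀ v : Fin 2 → K, eval v q ≠ 0 →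
      ∃ f ∈ FD K (n + 2) a d, psi (evM (v 0) (v 1) Φ) f = Pi.single j (Polynomial.X ^ l) := by
  obtain ⟨f, hf, hfl⟩ := h (x := Pi.single j (Polynomial.X ^ l)) (by
    rw [mem_FD]
    intro i
    by_cases hi : i = j
    · subst hi; simpa using X_pow_mem_LE hl
    · simp [hi])
  obtain ⟨c, hc, t, ht⟩ := clear_denoms (A := MvPolynomial (Fin 2) K) (KK K) f
  have hmt : mapV t = inc K c • f := by
    funext i
    rw [Pi.smul_apply, Polynomial.smul_eq_C_mul]
    exact ht i
  have hmtF : mapV t ∈ FD (KK K) (n + 2) a d := by rw [hmt]; exact Submodule.smul_mem _ _ hf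
  rw [mem_FD] at hmtF
  have hpsi : psi (evM (X 0) (X 1) Φ) t = Pi.single j (Polynomial.C c * Polynomial.X ^ l) := by
    apply mapV_inj
    rw [← psi_genM, hmt, map_smul, hfl]
    funext i
    by_cases hi : i = j
    · subst hi
      simp [mapV, Polynomial.smul_eq_C_mul]
    · simp [mapV, hi]
  refine ⟨c, hc, fun v hv => ?_⟩
  have h1 := psi_map (Φ := Φ) (aeval v : MvPolynomial (Fin 2) K →ₐ[K] K) (X 0) (X 1) t
  rw [hpsi, aeval_X, aeval_X] at h1
  refine ⟨(eval v c)⁻¹ • fun i => (t i).map ((aeval v : MvPolynomial (Fin 2) K →ₐ[K] K) :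
    MvPolynomial (Fin 2) K →+* K), Submodule.smul_mem _ _ ?_, ?_⟩
  · rw [mem_FD]
    intro i
    exact LE_map (LE_of_map inc_inj (hmtF i))
  · rw [map_smul]
    funext i
    rw [Pi.smul_apply, h1]
    by_cases hi : i = j
    · subst hi
      have : (aeval v : MvPolynomial (Fin 2) K →ₐ[K] K) c = eval v c := by rw [aeval_eq_eval]
      simp [Polynomial.smul_eq_C_mul, ← mul_assoc, ← Polynomial.C_mul, inv_mul_cancel₀ hv]
    · simp [hi]

lemma spec_CZ {d : ℤ} (h : CZ a b (genM Φ) d) :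
    ∃ q : MvPolynomial (Fin 2) K, q ≠ 0 ∧ ∀ v : Fin 2 → K, eval v q ≠ 0 →
      CZ a b (evM (v 0) (v 1) Φ) d := by
  have h1 : ∀ (j : Fin n) (l : ℕ), ∃ q : MvPolynomial (Fin 2) K, q ≠ 0 ∧ ((l : ℤ) ≤ d - b j →
      ∀ v : Fin 2 → K, eval v q ≠ 0 → ∃ f ∈ FD K (n + 2) a d,
        psi (evM (v 0) (v 1) Φ) f = Pi.single j (Polynomial.X ^ l)) := by
    intro j l
    by_cases hl : (l : ℤ) ≤ d - b j
    · obtain ⟨q, hq, hq'⟩ := spec_one h j l hl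
      exact ⟨q, hq, fun _ => hq'⟩
    · exact ⟨1, one_ne_zero, fun h => absurd h hl⟩
  choose q hq hq' using h1
  refine ⟨∏ j, ∏ l ∈ Finset.range (d - b j + 1).toNat, q j l,
    Finset.prod_ne_zero_iff.2 fun j _ => Finset.prod_ne_zero_iff.2 fun l _ => hq j l, ?_⟩
  intro v hv
  apply CZ_of_monomials
  intro j l hl
  refine hq' j l hl v ?_
  rw [map_prod] at hv
  have h2 := Finset.prod_ne_zero_iff.1 hv j (Finset.mem_univ _)
  rw [map_prod] at h2
  exact Finset.prod_ne_zero_iff.1 h2 l (Finset.mem_range.2 (by omega))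

lemma spec_range {r D : ℤ} (h : ∀ d, r ≤ d → CZ a b (genM Φ) d) :
    ∃ q : MvPolynomial (Fin 2) K, q ≠ 0 ∧ ∀ v : Fin 2 → K, eval v q ≠ 0 →
      ∀ d, r ≤ d → d < D → CZ a b (evM (v 0) (v 1) Φ) d := by
  have h1 : ∀ d : ℤ, ∃ q : MvPolynomial (Fin 2) K, q ≠ 0 ∧ (r ≤ d →
      ∀ v : Fin 2 → K, eval v q ≠ 0 → CZ a b (evM (v 0) (v 1) Φ) d) := by
    intro d
    by_cases hd : r ≤ d
    · obtain ⟨q, hq, hq'⟩ := spec_CZ (h d hd)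
      exact ⟨q, hq, fun _ => hq'⟩
    · exact ⟨1, one_ne_zero, fun h => absurd h hd⟩
  choose q hq hq' using h1
  refine ⟨∏ d ∈ Finset.Ico r D, q d, Finset.prod_ne_zero_iff.2 fun d _ => hq d, ?_⟩
  intro v hv d hd hdD
  rw [map_prod] at hv
  exact hq' d hd v (Finset.prod_ne_zero_iff.1 hv d (Finset.mem_Ico.2 ⟨hd, hdD⟩))

lemma exists_P [Infinite K] {q : MvPolynomial (Fin 2) K} (hq : q ≠ 0) :
    ∃ P : MvPolynomial (Fin 3) K, P ≠ 0 ∧ ∀ c : Fin 3 → K, eval c P ≠ 0 →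
      c 2 ≠ 0 ∧ eval ![-(c 0 / c 2), -(c 1 / c 2)] q ≠ 0 := by
  set N := q.totalDegree
  set P : MvPolynomial (Fin 3) K := X 2 * ∑ m ∈ q.support,
    C (coeff m q) * (-X 0) ^ (m 0) * (-X 1) ^ (m 1) * X 2 ^ (N - (m 0 + m 1)) with hP
  have key : ∀ c : Fin 3 → K, c 2 ≠ 0 →
      eval c P = c 2 ^ (N + 1) * eval ![-(c 0 / c 2), -(c 1 / c 2)] q := by
    intro c hc
    rw [eval_eq' _ q, hP, map_mul, map_sum, eval_X, pow_succ', mul_assoc]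
    congr 1
    rw [Finset.mul_sum]
    refine Finset.sum_congr rfl fun m hm => ?_
    have hm' : m 0 + m 1 ≤ N := by
      have := le_totalDegree hm
      simpa [Finsupp.sum_fintype, Fin.sum_univ_two] using this
    obtain ⟨e, he⟩ := Nat.exists_eq_add_of_le hm'
    simp only [map_mul, map_pow, map_neg, eval_X, eval_C, Fin.prod_univ_two, Matrix.cons_val_zero,
      Matrix.cons_val_one]
    rw [he, Nat.add_sub_cancel_left]
    have e0 : -(c 0 / c 2) = -c 0 * (c 2)⁻¹ := by ring
    have e1 : -(c 1 / c 2) = -c 1 * (c 2)⁻¹ := by ring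
    rw [e0, e1, mul_pow, mul_pow, pow_add, pow_add]
    have f0 : c 2 ^ (m 0) * (c 2)⁻¹ ^ (m 0) = 1 := by
      rw [← mul_pow, mul_inv_cancel₀ hc, one_pow]
    have f1 : c 2 ^ (m 1) * (c 2)⁻¹ ^ (m 1) = 1 := by
      rw [← mul_pow, mul_inv_cancel₀ hc, one_pow]
    calc coeff m q * (-c 0) ^ m 0 * (-c 1) ^ m 1 * c 2 ^ e
        = coeff m q * (-c 0) ^ m 0 * (-c 1) ^ m 1 * c 2 ^ e * 1 * 1 := by ring
      _ = _ := by nth_rw 1 [← f0]; rw [← f1]; ring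
  refine ⟨P, ?_, ?_⟩
  · intro h0
    apply hq
    apply MvPolynomial.funext
    intro v
    have := key ![-(v 0), -(v 1), 1] (by simp)
    rw [h0] at this
    have e : (![-(-(v 0) / 1), -(-(v 1) / 1)] : Fin 2 → K) = v := by
      funext i; fin_cases i <;> simp
    simp only [Matrix.cons_val_zero, Matrix.cons_val_one, Matrix.cons_val, e, one_pow, one_mul,
      map_zero] at this
    rw [← this, map_zero]
  · intro c hc
    have h2 : c 2 ≠ 0 := by
      intro h
      apply hc
      rw [hP, map_mul, eval_X, h, zero_mul]
    refine ⟨h2, fun h => hc ?_⟩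
    rw [key c h2, h, mul_zero]

lemma hN_eq {k k' : Type*} [Field k] [Field k'] {Ψ : Matrix (Fin n) (Fin (n + 2)) (Polynomial k)}
    {Ψ' : Matrix (Fin n) (Fin (n + 2)) (Polynomial k')}
    (h : ∀ j i, Ψ j i ∈ LE k (a i - b j)) (h' : ∀ j i, Ψ' j i ∈ LE k' (a i - b j)) {d : ℤ}
    (hz : CZ a b Ψ d) (hz' : CZ a b Ψ' d) : hN a Ψ d = hN a Ψ' d := by
  have h1 := finrank_ND h hz
  have h2 := finrank_ND h' hz'
  unfold hN
  omega

/-- The key division step: the coefficient at the extreme degree forces the degree bound. -/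
lemma LE_of_smul {k : Type*} [Field k] {g f : Polynomial k} {m : ℕ} {d p : ℤ} {ai : ℤ}
    (hm : (m : ℤ) = p - ai) (hf : f ∈ LE k (p - ai)) (hne : f.coeff m ≠ 0)
    (hgf : g * f ∈ LE k (d - ai)) : g ∈ LE k (d - p) := by
  have hdeg : f.natDegree = m := by
    apply le_antisymm
    · rw [Polynomial.natDegree_le_iff_coeff_eq_zero]
      intro N hN
      exact hf N (by omega)
    · exact Polynomial.le_natDegree_of_ne_zero hne
  have hf0 : f ≠ 0 := by rintro rfl; simp at hne
  by_cases hg : g = 0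
  · rw [hg]; exact Submodule.zero_mem _
  intro l hl
  by_contra hc
  have h1 := Polynomial.le_natDegree_of_ne_zero hc
  have h2 : (g * f).coeff (g.natDegree + m) ≠ 0 := by
    rw [← hdeg, Polynomial.coeff_mul_degree_add_degree]
    exact mul_ne_zero (by simpa using hg) (by simpa using hf0)
  exact h2 (hgf _ (by push_cast; omega))

theorem main [CharZero K] (hΦ : ∀ j i, homog (Φ j i) (a i - b j))
    (hfin : FiniteColength n a b Φ) :
    ∃ P : MvPolynomial (Fin 3) K, P ≠ 0 ∧ ∀ c : Fin 3 → K, eval c P ≠ 0 →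
      ∃ r : ℤ,
        (∀ d : ℤ, d < r →
          Function.Injective (mulLmap n a b Φ (linform c) (homog_linform c) d)) ∧
        (∀ d : ℤ, r ≤ d →
          Function.Surjective (mulLmap n a b Φ (linform c) (homog_linform c) d)) := by
  obtain ⟨D, hD⟩ := hfin
  have hgen : ∀ j i, genM Φ j i ∈ LE (KK K) (a i - b j) := evM_LE hΦ _ _
  obtain ⟨r, hr, hcase⟩ := univ_main hgen (D := D) fun d hd => CZ_of_fin _ _ (hD d hd)
  obtain ⟨q, hq, hqv⟩ := spec_range (D := D) hr
  have hCZ : ∀ v : Fin 2 → K, eval v q ≠ 0 → ∀ d, r ≤ d → CZ a b (evM (v 0) (v 1) Φ) d := by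
    intro v hv d hd
    rcases lt_or_ge d D with h | h
    · exact hqv v hv d hd h
    · exact CZ_of_fin _ _ (hD d h)
  have hspec : ∀ v : Fin 2 → K, eval v q ≠ 0 →
      hN a (evM (v 0) (v 1) Φ) r = hN a (genM Φ) r := fun v hv =>
    hN_eq (evM_LE hΦ _ _) hgen (hCZ v hv r le_rfl) (hr r le_rfl)
  rcases hcase with hsmall | ⟨p, s, hs, hs0, hs1, hmap, hp⟩
  · obtain ⟨P, hP, hPc⟩ := exists_P hq
    refine ⟨P, hP, fun c hc => ⟨r, ?_, ?_⟩⟩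
    · obtain ⟨h2, hqc⟩ := hPc c hc
      intro d hd
      apply inj_of_lift h2
      intro f hf
      have hh := hspec _ hqc
      simp only [Matrix.cons_val_zero, Matrix.cons_val_one] at hh
      by_cases hf0 : f = 0
      · subst hf0
        refine ⟨0, Submodule.zero_mem _, map_zero _, ?_⟩
        funext i; simp [evV]
      · have := le_hN (d := r) hf0 hf
        omega
    · obtain ⟨h2, hqc⟩ := hPc c hc
      intro d hd
      exact surj_of_CZ h2 hΦ (hCZ _ hqc d hd)
  · obtain ⟨σ, hσ, hσ0, i, m, hm, hne⟩ := generic_section hΦ hs hs0 hs1 hmap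
    obtain ⟨P, hP, hPc⟩ := exists_P (mul_ne_zero hq hne)
    refine ⟨P, hP, fun c hc => ⟨r, ?_, ?_⟩⟩
    · obtain ⟨h2, hqc⟩ := hPc c hc
      rw [map_mul] at hqc
      have hqc1 := left_ne_zero_of_mul hqc
      have hqc2 := right_ne_zero_of_mul hqc
      intro d hd
      apply inj_of_lift h2
      intro f hf
      have hh := hspec _ hqc1
      simp only [Matrix.cons_val_zero, Matrix.cons_val_one] at hh
      rw [hp] at hh
      set α := -(c 0 / c 2)
      set β := -(c 1 / c 2)
      have hσc : evV α β σ ∈ ND a (evM α β Φ) p := by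
        rw [mem_ND]
        refine ⟨evV_mem _ _ hσ, ?_⟩
        rw [psi_evV, hσ0]
        funext i; simp [evV]
      have hcoef : (ev α β (σ i)).coeff m ≠ 0 := by
        have h3 := ev_map (aeval ![α, β] : MvPolynomial (Fin 2) K →ₐ[K] K) (X 0) (X 1) (σ i)
        rw [aeval_X, aeval_X] at h3
        simp only [Matrix.cons_val_zero, Matrix.cons_val_one] at h3
        rw [← h3, Polynomial.coeff_map]
        have : (aeval ![α, β] : MvPolynomial (Fin 2) K →ₐ[K] K) ((evG (σ i)).coeff m) =
          eval ![α, β] ((evG (σ i)).coeff m) := by rw [aeval_eq_eval]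
        exact fun h => hqc2 (this.symm.trans h)
      have hσc0 : evV α β σ ≠ 0 := by
        intro h
        have := congrFun h i
        apply hcoef
        rw [show ev α β (σ i) = 0 from this, Polynomial.coeff_zero]
      have hf' := ND_mono hd.le hf
      rw [← ND_eq_of_hN hσc0 hσc hh] at hf'
      obtain ⟨g, -, hgf⟩ := hf'
      rw [smulMap_apply] at hgf
      rw [mem_ND, mem_FD] at hf
      have hσi := evV_mem α β hσ
      rw [mem_FD] at hσi
      have hgi : g * evV α β σ i = f i := congrFun hgf i
      have hg : g ∈ LE K (d - p) := LE_of_smul hm (hσi i) hcoef (by rw [hgi]; exact hf.1 i)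
      obtain ⟨γ, hγ, hγev⟩ := lift_LE K hg
      have hγ' := hγev α β
      refine ⟨γ • σ, ?_, ?_, ?_⟩
      · rw [mem_degPiece] at hσ ⊢
        intro i
        have h4 := IsWeightedHomogeneous.mul hγ (hσ i)
        have e : d - p + (p - a i) = d - a i := by ring
        rw [e] at h4
        exact h4
      · have : phiK n Φ (γ • σ) = γ • phiK n Φ σ := by simp [phiK]
        rw [this, hσ0, smul_zero]
      · rw [← hgf]
        funext i
        have e : ev α β (γ * σ i) = g * ev α β (σ i) := by
          rw [map_mul, hγ']; simp
        exact e
    · obtain ⟨h2, hqc⟩ := hPc c hc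
      rw [map_mul] at hqc
      intro d hd
      exact surj_of_CZ h2 hΦ (hCZ _ (left_ne_zero_of_mul hqc) d hd)
end SS
end WLP
end

/-- For a general linear form `L` there is an integer `r` such that the
multiplication map `×L : M_{d-1} → M_d` is injective for all `d < r` and surjective for all
`d ≥ r`. -/
theorem statement7 {K : Type*} [Field K] [IsAlgClosed K] [CharZero K]
    (n : ℕ) (a : Fin (n + 2) → ℤ) (b : Fin n → ℤ)
    (Φ : Matrix (Fin n) (Fin (n + 2)) (MvPolynomial (Fin 3) K))
    (hΦ : ∀ j i, homog (Φ j i) (a i - b j))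
    (hfin : FiniteColength n a b Φ) :
    ∃ P : MvPolynomial (Fin 3) K, P ≠ 0 ∧ ∀ c : Fin 3 → K, eval c P ≠ 0 →
      ∃ r : ℤ,
        (∀ d : ℤ, d < r →
          Function.Injective (mulLmap n a b Φ (linform c) (homog_linform c) d)) ∧
        (∀ d : ℤ, r ≤ d →
          Function.Surjective (mulLmap n a b Φ (linform c) (homog_linform c) d)) := by
  exact WLP.main hΦ hfin
end
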